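/- arXiv:1612.04716 — 4 statements merged into one kernel-verified Lean document; each statement's English description precedes it below -/
import Mathlib

section
/- Let Γ be a countable directed graph, F a potential and β ∈ ℝ, and assume there is a vertex v₀ with 0 < Σ_{n=0}^∞ A(β)^n_{v₀,v} < ∞ for all v ∈ Γ_V. Let y be a ray in Γ. There is a nonzero e^{βF}-conformal measure on P(Γ) concentrated on 𝔹(y) if and only if V_β(v,y) < ∞ for all v ∈ Γ_V. When it exists, it is unique up to multiplication by a positive scalar, it is extremal, and the associated A(β)-harmonic vector v ↦ m(Z(v)) is a positive scalar multiple of the vector v ↦ V_β(v,y). -/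
/-!
Zero-indexed, `y_k` stands for the vertex `s (p.seq k)`, and `BBset s r p k` is the set of paths
that start in `y_k`, never return to `{y_0, …, y_k}`, and later leave `{y_0, …, y_j}` for ever
from `y_j`, for every `j > k`.

Vertex masses. A path in `𝔹(y)` leaves `{y_0, …, y_k}` for the last time at a unique moment, and
for large `k` it does so from `y_k`. Cutting there shows that `𝔹(y)` is the increasing union of the
sets `SS k` of paths with a tail in `BBset k`. A conformal measure `m` satisfies
`m (Z(v) ∩ SS k) = Green v y_k * m (BBset k)`, since a path in `SS k` is a finite path followed
by an element of `BBset k` in exactly one way; in the same way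
`m (BBset k) = LSum k * m (BBset (k+1))`. Hence `m (Z(v)) = m (BBset 0) * Vbeta v` when `m` is
concentrated on `𝔹(y)` (`Conformal.cylV_eq`). This gives the necessity of `Vbeta < ∞` and the
proportionality of the two vectors. A conformal measure is determined by its vertex masses
(`Conformal.eq_smul`), which gives uniqueness; extremality follows, because a measure dominated
by `m` is concentrated on `𝔹(y)` as well.

Existence. The sums `LSum k` are positive, because `p.seq k` itself is a path in `L_k`, and finite,
because the Green function of `v₀` is. Choose independently for each `j ≥ k` a path in `L_j` with
probability proportional to its weight; the law of the concatenation, divided by `Wprod k`, is a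
measure `ν k` carried by `BBset k` (`exists_nu`). Spreading `ν k` along all finite paths that end
in `y_k` (`spread`) gives a measure that increases with `k`, gives `Z(v)` the mass
`Green v y_k / Wprod k`, and is conformal on `Z(a)` unless `s a = y_k`. Since `y` is a ray,
the exception disappears for large `k`, and the supremum over `k` is the conformal measure sought.
It is finite on each `Z(v)` exactly because `Vbeta v < ∞` (`exists_conformal`).
-/

open MeasureTheory Filter Topology
open scoped ENNReal NNReal

namespace GraphKMS

variable {V A : Type}

/-- The space `P(Γ)` of infinite paths of a directed graph with vertex set `V`,
arrow set `A`, source map `s` and range map `r`. -/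
structure PathSpace (s r : A → V) : Type where
  seq : ℕ → A
  compat : ∀ i, r (seq i) = s (seq (i + 1))

/-- The Borel σ-algebra of `P(Γ)`, i.e. the trace on `P(Γ)` of the Borel σ-algebra of the
product `A^ℕ` with `A` discrete. -/
instance (s r : A → V) : MeasurableSpace (PathSpace s r) :=
  MeasurableSpace.comap (fun p => p.seq) (@MeasurableSpace.pi ℕ (fun _ => A) (fun _ => ⊤))

/-- The shift map `σ`. -/
def shift (s r : A → V) (p : PathSpace s r) : PathSpace s r :=
  ⟨fun i => p.seq (i + 1), fun i => p.compat (i + 1)⟩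

/-- The cylinder set `Z(v)` of a vertex. -/
def cylV (s r : A → V) (v : V) : Set (PathSpace s r) := {p | s (p.seq 0) = v}

/-- The cylinder set `Z(a)` of an arrow. -/
def cylA (s r : A → V) (a : A) : Set (PathSpace s r) := {p | p.seq 0 = a}

/-- A finite path: a source vertex together with a compatible list of arrows.
The empty list corresponds to the path of length `0` given by the vertex `src`. -/
structure FinPath (s r : A → V) : Type where
  src : V
  arrows : List A
  head_src : ∀ h : arrows ≠ [], s (arrows.head h) = src
  chain : arrows.Chain' (fun a b => r a = s b)

/-- The range `r(μ)` of a finite path. -/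
def finRng (s r : A → V) (μ : FinPath s r) : V :=
  match μ.arrows.getLast? with
  | none => μ.src
  | some a => r a

/-- The additive extension `F(μ)` of a potential to finite paths. -/
def finWt (s r : A → V) (F : A → ℝ) (μ : FinPath s r) : ℝ := (μ.arrows.map F).sum

/-- The cylinder set `Z(μ)` of a finite path. -/
def finCyl (s r : A → V) (μ : FinPath s r) : Set (PathSpace s r) :=
  {p | s (p.seq 0) = μ.src ∧ ∀ i : Fin μ.arrows.length, p.seq i.1 = μ.arrows.get i}

/-- The set of vertices occurring in a finite path. -/
def finVerts (s r : A → V) (μ : FinPath s r) : Set V :=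
  {μ.src} ∪ {v | ∃ a ∈ μ.arrows, s a = v ∨ r a = v}

/-- The entries of the matrix `A(β)`. -/
noncomputable def Amat (s r : A → V) (F : A → ℝ) (β : ℝ) (v w : V) : ℝ≥0∞ :=
  ∑' a : {a : A // s a = v ∧ r a = w}, ENNReal.ofReal (Real.exp (-(β * F a.1)))

/-- Powers of a `[0,∞]`-valued matrix. -/
noncomputable def matPow (M : V → V → ℝ≥0∞) : ℕ → V → V → ℝ≥0∞
  | 0 => fun v w => ({v} : Set V).indicator (fun _ => (1 : ℝ≥0∞)) w
  | n + 1 => fun v w => ∑' u : V, M v u * matPow M n u w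

/-- The entries of `A(β)ⁿ`. -/
noncomputable def Apow (s r : A → V) (F : A → ℝ) (β : ℝ) (n : ℕ) (v w : V) : ℝ≥0∞ :=
  matPow (Amat s r F β) n v w

/-- The Green function `Σₙ A(β)ⁿ_{v,w}`. -/
noncomputable def Green (s r : A → V) (F : A → ℝ) (β : ℝ) (v w : V) : ℝ≥0∞ :=
  ∑' n : ℕ, Apow s r F β n v w

/-- The Martin kernel `K_β(v,w)` with base point `v₀`. -/
noncomputable def MartinK (s r : A → V) (F : A → ℝ) (β : ℝ) (v₀ v w : V) : ℝ≥0∞ :=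
  Green s r F β v w / Green s r F β v₀ w

/-- A harmonic vector for a `[0,∞]`-valued matrix: a nonzero, finite-valued,
nonnegative vector fixed by the matrix. -/
def IsHarmonic (M : V → V → ℝ≥0∞) (ψ : V → ℝ≥0∞) : Prop :=
  ψ ≠ 0 ∧ (∀ v, ψ v ≠ ∞) ∧ ∀ v, (∑' w : V, M v w * ψ w) = ψ v

/-- A minimal harmonic vector. -/
def IsMinimalHarmonic (M : V → V → ℝ≥0∞) (ψ : V → ℝ≥0∞) : Prop :=
  IsHarmonic M ψ ∧ ∀ φ : V → ℝ≥0∞, IsHarmonic M φ → (∀ v, φ v ≤ ψ v) →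
    ∃ c : ℝ≥0, 0 < c ∧ ∀ v, φ v = (c : ℝ≥0∞) * ψ v

/-- An `e^{βF}`-conformal measure: a nonzero Borel measure which is finite on the
cylinders of vertices and satisfies `m(σ(B ∩ Z(a))) = e^{βF(a)} m(B ∩ Z(a))`. -/
def Conformal (s r : A → V) (F : A → ℝ) (β : ℝ) (m : Measure (PathSpace s r)) : Prop :=
  m ≠ 0 ∧ (∀ v : V, m (cylV s r v) ≠ ∞) ∧
    ∀ (a : A) (B : Set (PathSpace s r)), MeasurableSet B →
      m (shift s r '' (B ∩ cylA s r a)) =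
        ENNReal.ofReal (Real.exp (β * F a)) * m (B ∩ cylA s r a)

/-- An extremal conformal measure: every conformal measure dominated by it is a
positive scalar multiple of it. -/
def ExtremalConformal (s r : A → V) (F : A → ℝ) (β : ℝ) (m : Measure (PathSpace s r)) : Prop :=
  Conformal s r F β m ∧ ∀ m' : Measure (PathSpace s r), Conformal s r F β m' →
    (∀ B : Set (PathSpace s r), MeasurableSet B → m' B ≤ m B) →
    ∃ c : ℝ≥0, 0 < c ∧ m' = (c : ℝ≥0∞) • m

/-- A wandering path: its vertices leave every finite set of vertices. -/
def Wandering (s r : A → V) (p : PathSpace s r) : Prop :=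
  ∀ F₀ : Finset V, ∃ N : ℕ, ∀ i, N ≤ i → s (p.seq i) ∉ F₀

/-- A ray: an infinite path with pairwise distinct vertices. -/
def IsRay (s r : A → V) (p : PathSpace s r) : Prop :=
  Function.Injective fun i => s (p.seq i)

/-- The relation `p → q` between (wandering) paths. -/
def Leads (s r : A → V) (p q : PathSpace s r) : Prop :=
  ∀ (F₀ : Finset V) (N : ℕ), ∃ n₁ n₂ : ℕ, N ≤ n₁ ∧ N ≤ n₂ ∧
    ∃ μ : FinPath s r, μ.src = s (p.seq n₁) ∧ finRng s r μ = s (q.seq n₂) ∧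
      ∀ v ∈ finVerts s r μ, v ∉ F₀

/-- Nonempty path lists from `v` to `w`. -/
def IsPathList (s r : A → V) (l : List A) (v w : V) : Prop :=
  l ≠ [] ∧ l.Chain' (fun a b => r a = s b) ∧
    (∀ h : l ≠ [], s (l.head h) = v) ∧ ∀ h : l ≠ [], r (l.getLast h) = w

/-- The set `L_j(y)` (zero-indexed in `j`). -/
def Lset (s r : A → V) (p : PathSpace s r) (j : ℕ) : Set (List A) :=
  {l | IsPathList s r l (s (p.seq j)) (s (p.seq (j + 1))) ∧
    ∀ a ∈ l, ∀ i ≤ j, r a ≠ s (p.seq i)}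

/-- The sum `Σ_{μ ∈ L_j(y)} e^{-βF(μ)}`. -/
noncomputable def LSum (s r : A → V) (F : A → ℝ) (β : ℝ) (p : PathSpace s r) (j : ℕ) : ℝ≥0∞ :=
  ∑' l : Lset s r p j, ENNReal.ofReal (Real.exp (-(β * (l.1.map F).sum)))

/-- The product `𝕎(y[1,k+1[)` (zero-indexed: the product of the first `k` level sums). -/
noncomputable def Wprod (s r : A → V) (F : A → ℝ) (β : ℝ) (p : PathSpace s r) (k : ℕ) : ℝ≥0∞ :=
  ∏ j ∈ Finset.range k, LSum s r F β p j

/-- `𝕍_β(v,y)`: the limit of the nondecreasing sequence of quotients. -/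
noncomputable def Vbeta (s r : A → V) (F : A → ℝ) (β : ℝ) (v : V) (p : PathSpace s r) : ℝ≥0∞ :=
  Filter.limsup (fun k => Green s r F β v (s (p.seq k)) / Wprod s r F β p k) Filter.atTop

/-- `B_k(y)` (zero-indexed in `k`). -/
def Bset (s r : A → V) (p : PathSpace s r) (k : ℕ) : Set (PathSpace s r) :=
  {x | s (x.seq 0) = s (p.seq k) ∧ ∀ i, 1 ≤ i → ∀ j ≤ k, s (x.seq i) ≠ s (p.seq j)}

/-- `𝔹_k(y)` (zero-indexed in `k`). -/
def BBset (s r : A → V) (p : PathSpace s r) (k : ℕ) : Set (PathSpace s r) :=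
  Bset s r p k ∩ ⋂ (j : ℕ) (_ : k + 1 ≤ j), ⋃ i : ℕ, (shift s r)^[i] ⁻¹' Bset s r p j

/-- `𝔹(y)`. -/
def BB (s r : A → V) (p : PathSpace s r) : Set (PathSpace s r) :=
  ⋃ (n : ℕ) (k : ℕ), (shift s r)^[n] ⁻¹' ((shift s r)^[k] '' BBset s r p 0)

/-- A simple path from `v` to `w`: no arrow except possibly the last one has range `w`. -/
def IsSimplePath (s r : A → V) (v w : V) (l : List A) : Prop :=
  IsPathList s r l v w ∧ ∀ a ∈ l.dropLast, r a ≠ w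

/-- `R_{βF}(v,w)`: the sum of `e^{-βF(ν)}` over all simple paths `ν` from `v` to `w`. -/
noncomputable def Rsum (s r : A → V) (F : A → ℝ) (β : ℝ) (v w : V) : ℝ≥0∞ :=
  ∑' l : {l : List A // IsSimplePath s r v w l},
    ENNReal.ofReal (Real.exp (-(β * (l.1.map F).sum)))

open Classical in
/-- The restriction of a matrix to a subset of the index set (extended by `0`). -/
noncomputable def restrMat (M : V → V → ℝ≥0∞) (S : Set V) (v w : V) : ℝ≥0∞ :=
  if v ∈ S ∧ w ∈ S then M v w else 0

/-- A loop: a nonempty path list whose range equals its source. -/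
def IsLoop (s r : A → V) (l : List A) : Prop :=
  l ≠ [] ∧ l.Chain' (fun a b => r a = s b) ∧
    ∀ h : l ≠ [], r (l.getLast h) = s (l.head h)

/-! ### Measurability on the path space -/

section Basics

variable (s r : A → V)

lemma PathSpace.ext_seq {s r : A → V} {x y : PathSpace s r} (h : ∀ i, x.seq i = y.seq i) :
    x = y := by
  cases x; cases y; congr; exact funext h

lemma measurableSet_seq (i : ℕ) (S : Set A) :
    MeasurableSet {x : PathSpace s r | x.seq i ∈ S} := by
  let _ : MeasurableSpace A := ⊤
  exact ⟨(fun f : ℕ → A => f i) ⁻¹' S, measurable_pi_apply i trivial, rfl⟩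

lemma measurable_of_seq [Countable A] {Ω : Type*} {mΩ : MeasurableSpace Ω}
    (f : Ω → PathSpace s r) (h : ∀ i a, MeasurableSet {ω | (f ω).seq i = a}) :
    Measurable f := by
  let _ : MeasurableSpace A := ⊤
  rw [measurable_comap_iff]
  refine measurable_pi_lambda _ fun i => measurable_to_countable' fun a => h i a

lemma measurableSet_cylA (a : A) : MeasurableSet (cylA s r a) :=
  measurableSet_seq s r 0 {a}

lemma measurableSet_cylV (v : V) : MeasurableSet (cylV s r v) :=
  measurableSet_seq s r 0 {a | s a = v}

lemma measurable_shift [Countable A] : Measurable (shift s r) :=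
  measurable_of_seq s r _ fun i a => measurableSet_seq s r (i + 1) {a}

lemma measurable_shift_iterate [Countable A] (n : ℕ) : Measurable (shift s r)^[n] :=
  (measurable_shift s r).iterate n

lemma shift_iterate_seq {s r : A → V} (n : ℕ) (x : PathSpace s r) (i : ℕ) :
    ((shift s r)^[n] x).seq i = x.seq (i + n) := by
  induction n generalizing x with
  | zero => rfl
  | succ n ih => rw [Function.iterate_succ_apply, ih]; rfl

/-- The path `a x` obtained by prefixing the arrow `a` to an infinite path `x` starting
in `r a`. -/
def consP (a : A) (x : PathSpace s r) (h : r a = s (x.seq 0)) : PathSpace s r where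
  seq i := Nat.casesOn i a x.seq
  compat i := by
    cases i with
    | zero => exact h
    | succ i => exact x.compat i

lemma shift_image_eq (a : A) (B : Set (PathSpace s r)) :
    shift s r '' (B ∩ cylA s r a) =
      Subtype.val '' {x : cylV s r (r a) | consP s r a x.1 x.2.symm ∈ B} := by
  ext x
  constructor
  · rintro ⟨z, ⟨hzB, hza⟩, rfl⟩
    have hh : r a = s ((shift s r z).seq 0) := by
      have := z.compat 0
      rw [show z.seq 0 = a from hza] at this
      exact this
    refine ⟨⟨shift s r z, hh.symm⟩, ?_, rfl⟩
    have : consP s r a (shift s r z) hh = z := by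
      apply PathSpace.ext_seq
      intro i
      cases i with
      | zero => exact hza.symm
      | succ i => rfl
    show consP s r a (shift s r z) hh ∈ B
    rwa [this]
  · rintro ⟨⟨x, hx⟩, hB, rfl⟩
    exact ⟨consP s r a x hx.symm, ⟨hB, rfl⟩, rfl⟩

lemma measurable_consP [Countable A] (a : A) :
    Measurable (fun x : cylV s r (r a) => consP s r a x.1 x.2.symm) := by
  refine measurable_of_seq s r _ fun i b => ?_
  cases i with
  | zero => exact MeasurableSet.const (a = b)
  | succ i => exact measurable_subtype_coe (measurableSet_seq s r i {b})

lemma measurableSet_shift_image [Countable A] (a : A) {B : Set (PathSpace s r)}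
    (hB : MeasurableSet B) : MeasurableSet (shift s r '' (B ∩ cylA s r a)) := by
  rw [shift_image_eq]
  exact (measurableSet_cylV s r (r a)).subtype_image (measurable_consP s r a hB)

/-- The image of a measure under `x ↦ a x`, where `x` ranges over the paths starting
in `r a`. -/
noncomputable def consM (a : A) (ν : Measure (PathSpace s r)) : Measure (PathSpace s r) :=
  (ν.comap (Subtype.val : cylV s r (r a) → PathSpace s r)).map
    (fun x => consP s r a x.1 x.2.symm)

lemma consM_apply [Countable A] (a : A) (ν : Measure (PathSpace s r)) {B : Set (PathSpace s r)}
    (hB : MeasurableSet B) : consM s r a ν B = ν (shift s r '' (B ∩ cylA s r a)) := by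
  rw [consM, Measure.map_apply (measurable_consP s r a) hB,
    comap_subtype_coe_apply (measurableSet_cylV s r (r a)), shift_image_eq]
  rfl

/-- The first `n` arrows of an infinite path. -/
def pref {s r : A → V} (x : PathSpace s r) (n : ℕ) : List A := (List.range n).map x.seq

@[simp] lemma pref_length {s r : A → V} (x : PathSpace s r) (n : ℕ) :
    (pref x n).length = n := by simp [pref]

@[simp] lemma pref_zero {s r : A → V} (x : PathSpace s r) : pref x 0 = [] := rfl

lemma pref_succ {s r : A → V} (x : PathSpace s r) (n : ℕ) :
    pref x (n + 1) = x.seq 0 :: pref (shift s r x) n := by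
  simp [pref, List.range_succ_eq_map, shift]

/-- The set `l B` of the paths which begin with the list `l` and continue with a path
in `B`. -/
def pre (l : List A) (B : Set (PathSpace s r)) : Set (PathSpace s r) :=
  {x | pref x l.length = l ∧ (shift s r)^[l.length] x ∈ B}

/-- The set `l⁻¹ B` of the paths `x` such that `l x` is a path in `B`. -/
def pull (l : List A) (B : Set (PathSpace s r)) : Set (PathSpace s r) :=
  {x | ∃ z ∈ B, pref z l.length = l ∧ (shift s r)^[l.length] z = x}

@[simp] lemma pre_nil (B : Set (PathSpace s r)) : pre s r [] B = B := by
  ext x; simp [pre]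

lemma pre_cons (a : A) (l : List A) (B : Set (PathSpace s r)) :
    pre s r (a :: l) B = cylA s r a ∩ shift s r ⁻¹' pre s r l B := by
  ext x
  simp [pre, pref_succ, cylA, and_assoc]

@[simp] lemma pull_nil (B : Set (PathSpace s r)) : pull s r [] B = B := by
  ext x; simp [pull]

lemma pull_cons (a : A) (l : List A) (B : Set (PathSpace s r)) :
    pull s r (a :: l) B = pull s r l (shift s r '' (B ∩ cylA s r a)) := by
  ext x
  constructor
  · rintro ⟨z, hz, h1, h2⟩
    simp only [List.length_cons, pref_succ, List.cons.injEq] at h1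
    exact ⟨shift s r z, ⟨z, ⟨hz, h1.1⟩, rfl⟩, h1.2, h2⟩
  · rintro ⟨_, ⟨z, ⟨hz, ha⟩, rfl⟩, h1, h2⟩
    refine ⟨z, hz, ?_, h2⟩
    simp only [List.length_cons, pref_succ, List.cons.injEq]
    exact ⟨ha, h1⟩

lemma pull_append (l l' : List A) (B : Set (PathSpace s r)) :
    pull s r (l ++ l') B = pull s r l' (pull s r l B) := by
  induction l generalizing B with
  | nil => simp
  | cons a l ih => rw [List.cons_append, pull_cons, pull_cons, ih]

lemma measurableSet_pre [Countable A] (l : List A) {B : Set (PathSpace s r)}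
    (hB : MeasurableSet B) : MeasurableSet (pre s r l B) := by
  induction l with
  | nil => simpa
  | cons a l ih =>
    rw [pre_cons]
    exact (measurableSet_cylA s r a).inter (measurable_shift s r ih)

lemma measurableSet_pull [Countable A] (l : List A) {B : Set (PathSpace s r)}
    (hB : MeasurableSet B) : MeasurableSet (pull s r l B) := by
  induction l generalizing B with
  | nil => simpa
  | cons a l ih => rw [pull_cons]; exact ih (measurableSet_shift_image s r a hB)

/-- The image of a measure under `x ↦ l x`, where `x` ranges over the paths that can be
prefixed by the list `l`. -/
noncomputable def lpush (l : List A) (ν : Measure (PathSpace s r)) : Measure (PathSpace s r) :=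
  l.foldr (consM s r) ν

lemma lpush_apply [Countable A] (l : List A) (ν : Measure (PathSpace s r))
    {B : Set (PathSpace s r)} (hB : MeasurableSet B) :
    lpush s r l ν B = ν (pull s r l B) := by
  induction l generalizing B with
  | nil => simp [lpush]
  | cons a l ih =>
    rw [pull_cons, ← ih (measurableSet_shift_image s r a hB), ← consM_apply s r a _ hB]
    rfl

lemma shift_image_inter_cylA (a : A) (B : Set (PathSpace s r)) :
    shift s r '' (shift s r ⁻¹' B ∩ cylA s r a) = B ∩ cylV s r (r a) := by
  ext x
  constructor
  · rintro ⟨z, ⟨hz, ha⟩, rfl⟩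
    refine ⟨hz, ?_⟩
    have := z.compat 0
    rw [show z.seq 0 = a from ha] at this
    exact this.symm
  · rintro ⟨hB, hx⟩
    exact ⟨consP s r a x hx.symm, ⟨hB, rfl⟩, rfl⟩

end Basics

/-! ### Weights of finite paths -/

section Weights

variable (F : A → ℝ) (β : ℝ)

/-- The weight `e^{-βF(l)}` of a list of arrows. -/
noncomputable def wt (l : List A) : ℝ≥0∞ := ENNReal.ofReal (Real.exp (-(β * (l.map F).sum)))

@[simp] lemma wt_nil : wt F β [] = 1 := by simp [wt]

lemma wt_append (l l' : List A) : wt F β (l ++ l') = wt F β l * wt F β l' := by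
  rw [wt, wt, wt, ← ENNReal.ofReal_mul (Real.exp_nonneg _), ← Real.exp_add]
  congr 2
  simp
  ring

lemma wt_cons (a : A) (l : List A) : wt F β (a :: l) = wt F β [a] * wt F β l :=
  wt_append F β [a] l

lemma wt_ne_zero (l : List A) : wt F β l ≠ 0 := by
  simp [wt, Real.exp_pos]

lemma wt_ne_top (l : List A) : wt F β l ≠ ∞ := ENNReal.ofReal_ne_top

lemma exp_mul_wt (a : A) : ENNReal.ofReal (Real.exp (β * F a)) * wt F β [a] = 1 := by
  rw [wt, ← ENNReal.ofReal_mul (Real.exp_nonneg _), ← Real.exp_add]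
  simp

lemma wt_mul_exp (a : A) : wt F β [a] * ENNReal.ofReal (Real.exp (β * F a)) = 1 := by
  rw [mul_comm, exp_mul_wt]

variable (s r : A → V)

/-- Summing over the arrows with source `v` amounts to summing against the row `v` of the
matrix `A(β)`. -/
lemma tsum_Amat_mul (v : V) (f : V → ℝ≥0∞) :
    ∑' u, Amat s r F β v u * f u = ∑' a : {a : A // s a = v}, wt F β [a.1] * f (r a.1) := by
  classical
  have h1 : ∀ u, Amat s r F β v u * f u =
      ∑' a : {a : A // s a = v}, if r a.1 = u then wt F β [a.1] * f (r a.1) else 0 := by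
    intro u
    rw [Amat, ← ENNReal.tsum_mul_right]
    refine (tsum_subtype {a : A | s a = v ∧ r a = u}
      (fun a => ENNReal.ofReal (Real.exp (-(β * F a))) * f u)).trans (Eq.trans ?_
        (tsum_subtype {a : A | s a = v}
          (fun a => if r a = u then wt F β [a] * f (r a) else 0)).symm)
    congr 1
    ext a
    by_cases h1 : s a = v <;> by_cases h2 : r a = u <;> simp [h1, h2, Set.indicator, wt]
  simp_rw [h1]
  rw [ENNReal.tsum_comm]
  congr 1
  ext a
  rw [tsum_eq_single (r a.1)]
  · simp
  · intro u hu
    simp [hu.symm]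

end Weights

/-! ### Consequences of conformality -/

section Conf

variable {s r : A → V} {F : A → ℝ} {β : ℝ} {m : Measure (PathSpace s r)}

lemma Conformal.cylA_inter [Countable A] (hm : Conformal s r F β m) (a : A)
    {B : Set (PathSpace s r)} (hB : MeasurableSet B) :
    m (cylA s r a ∩ shift s r ⁻¹' B) = wt F β [a] * m (B ∩ cylV s r (r a)) := by
  have h := hm.2.2 a _ (measurable_shift s r hB)
  rw [shift_image_inter_cylA] at h
  rw [h, ← mul_assoc, wt_mul_exp, one_mul, Set.inter_comm]

lemma measure_cylV_inter [Countable A] (m : Measure (PathSpace s r)) (v : V)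
    {B : Set (PathSpace s r)} (hB : MeasurableSet B) :
    m (cylV s r v ∩ B) = ∑' a : {a : A // s a = v}, m (cylA s r a.1 ∩ B) := by
  have : cylV s r v ∩ B = ⋃ a : {a : A // s a = v}, cylA s r a.1 ∩ B := by
    ext x
    simp [cylV, cylA]
  rw [this, measure_iUnion]
  · intro a b hab
    refine Set.disjoint_left.2 fun x hx hx' => hab (Subtype.ext ?_)
    exact hx.1.symm.trans hx'.1
  · exact fun a => (measurableSet_cylA s r a.1).inter hB

/-- A conformal measure gives the set of paths that start in `v` and lie in `B ⊆ Z(w)` after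
`n` steps the mass `A(β)ⁿ_{v,w} m(B)`. -/
lemma Conformal.cylV_inter_iterate [Countable A] (hm : Conformal s r F β m) {w : V}
    {B : Set (PathSpace s r)} (hB : MeasurableSet B) (hBw : B ⊆ cylV s r w) (n : ℕ) (v : V) :
    m (cylV s r v ∩ (shift s r)^[n] ⁻¹' B) = Apow s r F β n v w * m B := by
  induction n generalizing v with
  | zero =>
    by_cases h : v = w
    · subst h
      simp [Apow, matPow, Set.inter_eq_self_of_subset_right hBw]
    · have : cylV s r v ∩ B = ∅ := by
        ext x
        simp only [Set.mem_inter_iff, Set.mem_empty_iff_false, iff_false, not_and]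
        exact fun hx hxB => h (hx.symm.trans (hBw hxB))
      simp [Apow, matPow, this, Ne.symm h]
  | succ n ih =>
    rw [measure_cylV_inter m v (measurable_shift_iterate s r (n + 1) hB)]
    have : ∀ a : {a : A // s a = v}, m (cylA s r a.1 ∩ (shift s r)^[n + 1] ⁻¹' B) =
        wt F β [a.1] * Apow s r F β n (r a.1) w * m B := by
      intro a
      rw [mul_assoc, ← ih, Set.inter_comm (cylV s r (r a.1)),
        ← hm.cylA_inter a.1 (measurable_shift_iterate s r n hB)]
      rfl
    simp_rw [this]
    rw [ENNReal.tsum_mul_right, ← tsum_Amat_mul F β s r v (fun u => Apow s r F β n u w)]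
    rfl

/-- A conformal measure scales by `e^{-βF(l)}` under prefixing a path `l` which ends in the
common source of the paths considered. -/
lemma Conformal.pre [Countable A] (hm : Conformal s r F β m) {v w : V} {l : List A}
    (hl : IsPathList s r l v w) {B : Set (PathSpace s r)} (hB : MeasurableSet B)
    (hBw : B ⊆ cylV s r w) : m (pre s r l B) = wt F β l * m B := by
  obtain ⟨hne, hch, -, hlast⟩ := hl
  induction l with
  | nil => exact absurd rfl hne
  | cons a l ih =>
    rw [pre_cons, hm.cylA_inter a (measurableSet_pre s r l hB), wt_cons F β a l, mul_assoc]
    congr 1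
    rcases l with _ | ⟨b, l⟩
    · have : r a = w := by simpa using hlast hne
      rw [this, pre_nil, Set.inter_eq_self_of_subset_left hBw, wt_nil, one_mul]
    · rw [← ih (by simp) (List.isChain_cons_cons.1 hch).2 (by simpa using hlast),
        Set.inter_eq_self_of_subset_left]
      rw [pre_cons]
      intro x hx
      have : x.seq 0 = b := hx.1
      show s (x.seq 0) = r a
      rw [this, (List.isChain_cons_cons.1 hch).1]

/-- The set of the paths which begin with `l`. -/
def cylL (s r : A → V) (l : List A) : Set (PathSpace s r) := {x | pref x l.length = l}

lemma cylL_eq (l : List A) : cylL s r l = GraphKMS.pre s r l Set.univ := by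
  ext x; simp [cylL, GraphKMS.pre]

lemma pref_getElem (x : PathSpace s r) (n i : ℕ) (h : i < (pref x n).length) :
    (pref x n)[i] = x.seq i := by
  simp [pref]

lemma pref_chain (x : PathSpace s r) (n : ℕ) :
    (pref x n).Chain' (fun a b => r a = s b) := by
  induction n generalizing x with
  | zero => exact List.isChain_nil
  | succ n ih =>
    rw [pref_succ]
    cases n with
    | zero => exact List.isChain_singleton _
    | succ n =>
      have := ih (shift s r x)
      rw [pref_succ] at this ⊢
      exact List.isChain_cons_cons.2 ⟨x.compat 0, this⟩

lemma generateFrom_cylL [Countable A] :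
    (inferInstance : MeasurableSpace (PathSpace s r)) =
      MeasurableSpace.generateFrom (Set.range (cylL s r)) := by
  apply le_antisymm
  · have : @Measurable _ _ (MeasurableSpace.generateFrom (Set.range (cylL s r))) _
        (id : PathSpace s r → PathSpace s r) := by
      refine @measurable_of_seq V A s r _ _ (MeasurableSpace.generateFrom _) _ fun i a => ?_
      have : {x : PathSpace s r | (id x).seq i = a} =
          ⋃ l : {l : List A // l.length = i + 1 ∧ l[i]? = some a}, cylL s r l.1 := by
        ext x
        simp only [Set.mem_setOf_eq, Set.mem_iUnion, cylL, id]
        constructor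
        · intro h
          exact ⟨⟨pref x (i + 1), by simp [pref, h]⟩, by simp⟩
        · rintro ⟨⟨l, h1, h2⟩, h3⟩
          simp only [h1] at h3
          rw [← h3] at h2
          simpa [pref] using h2
      rw [this]
      exact MeasurableSet.iUnion fun l => MeasurableSpace.measurableSet_generateFrom ⟨l.1, rfl⟩
    intro B hB
    exact this hB
  · apply MeasurableSpace.generateFrom_le
    rintro _ ⟨l, rfl⟩
    rw [cylL_eq]
    exact measurableSet_pre s r l MeasurableSet.univ

lemma pref_prefix (x : PathSpace s r) {n k : ℕ} (h : n ≤ k) :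
    pref x n = (pref x k).take n := by
  simp [pref, ← List.map_take, List.take_range, h]

lemma isPiSystem_cylL : IsPiSystem (Set.range (cylL s r)) := by
  have key : ∀ l l' : List A, l.length ≤ l'.length → (cylL s r l ∩ cylL s r l').Nonempty →
      cylL s r l ∩ cylL s r l' = cylL s r l' := by
    rintro l l' h ⟨z, hz, hz'⟩
    apply Set.inter_eq_self_of_subset_right
    intro x hx
    simp only [cylL, Set.mem_setOf_eq] at hx hz hz' ⊢
    rw [pref_prefix x h, hx, ← hz', ← pref_prefix z h, hz]
  rintro _ ⟨l, rfl⟩ _ ⟨l', rfl⟩ hne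
  rcases le_total l.length l'.length with h | h
  · exact ⟨l', (key l l' h hne).symm⟩
  · rw [Set.inter_comm] at hne ⊢
    exact ⟨l, (key l' l h hne).symm⟩

/-- A conformal measure is determined by the masses of the cylinders `Z(v)`. -/
lemma Conformal.eq_smul [Countable A] {m' : Measure (PathSpace s r)}
    (hm : Conformal s r F β m) (hm' : Conformal s r F β m') (c : ℝ≥0∞)
    (h : ∀ v, m' (cylV s r v) = c * m (cylV s r v)) : m' = c • m := by
  have key : ∀ l : List A, l ≠ [] → m' (cylL s r l) = c * m (cylL s r l) := by
    intro l hl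
    by_cases hc : l.Chain' (fun a b => r a = s b)
    · have hp : IsPathList s r l (s (l.head hl)) (r (l.getLast hl)) :=
        ⟨hl, hc, fun _ => rfl, fun _ => rfl⟩
      have e : cylL s r l = GraphKMS.pre s r l (cylV s r (r (l.getLast hl))) := by
        ext x
        simp only [cylL, GraphKMS.pre, Set.mem_setOf_eq, iff_self_and]
        intro hx
        show s (((shift s r)^[l.length] x).seq 0) = _
        have hpos : 0 < l.length := List.length_pos_iff.2 hl
        have h1 := x.compat (l.length - 1)
        rw [Nat.sub_add_cancel hpos] at h1
        rw [shift_iterate_seq, zero_add, ← h1, List.getLast_eq_getElem]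
        congr 1
        have := pref_getElem x l.length (l.length - 1) (by simp [hpos])
        rw [← this]
        congr 1
      rw [e, hm.pre hp (measurableSet_cylV s r _) subset_rfl,
        hm'.pre hp (measurableSet_cylV s r _) subset_rfl, h]
      ring
    · have e : cylL s r l = ∅ := by
        ext x
        simp only [cylL, Set.mem_setOf_eq, Set.mem_empty_iff_false, iff_false]
        intro hx
        exact hc (hx ▸ pref_chain x l.length)
      simp [e]
  refine Measure.ext_of_generateFrom_of_cover (S := Set.range (cylL s r))
    (T := Set.range fun a : A => cylL s r [a]) generateFrom_cylL (Set.countable_range _)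
    isPiSystem_cylL ?_ ?_ ?_ ?_
  · refine Set.eq_univ_of_forall fun x => ⟨_, ⟨x.seq 0, rfl⟩, ?_⟩
    simp [cylL, pref]
  · rintro _ ⟨a, rfl⟩
    refine ne_top_of_le_ne_top (hm'.2.1 (s a)) (measure_mono fun x hx => ?_)
    have : x.seq 0 = a := by simpa [cylL, pref] using hx
    simp [cylV, this]
  · rintro _ ⟨a, rfl⟩ _ ⟨l, rfl⟩
    rcases (cylL s r l ∩ cylL s r [a]).eq_empty_or_nonempty with he | he
    · simp [he]
    · rcases eq_or_ne l [] with rfl | hl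
      · have : cylL s r ([] : List A) = Set.univ := by ext x; simp [cylL]
        rw [this, Set.univ_inter]
        simpa using key [a] (by simp)
      · have : cylL s r l ∩ cylL s r [a] = cylL s r l := by
          apply Set.inter_eq_self_of_subset_left
          obtain ⟨z, hz, hz'⟩ := he
          have hle : 1 ≤ l.length := List.length_pos_iff.2 hl
          intro x hx
          simp only [cylL, Set.mem_setOf_eq, List.length_singleton] at hx hz hz' ⊢
          rw [pref_prefix x hle, hx, ← hz, ← pref_prefix z hle, hz']
        rw [this]
        simpa using key l hl
  · rintro _ ⟨a, rfl⟩
    simpa using key [a] (by simp)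

end Conf

/-! ### The sets `𝔹_k(y)` and their decompositions -/

section BBsets

variable {s r : A → V} {F : A → ℝ} {β : ℝ} {p : PathSpace s r}
  {m : Measure (PathSpace s r)}

lemma mem_BBset {k : ℕ} {x : PathSpace s r} :
    x ∈ BBset s r p k ↔ x ∈ Bset s r p k ∧
      ∀ j, k + 1 ≤ j → ∃ i, (shift s r)^[i] x ∈ Bset s r p j := by
  simp [BBset]

lemma measurableSet_Bset (k : ℕ) : MeasurableSet (Bset s r p k) := by
  have : Bset s r p k = cylV s r (s (p.seq k)) ∩ ⋂ (i : ℕ) (_ : 1 ≤ i) (j : ℕ) (_ : j ≤ k),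
      {x | x.seq i ∈ {a | s a ≠ s (p.seq j)}} := by
    ext x
    simp [Bset, cylV]
  rw [this]
  exact (measurableSet_cylV s r _).inter <| .iInter fun i => .iInter fun _ => .iInter fun j =>
    .iInter fun _ => measurableSet_seq s r i _

lemma measurableSet_BBset [Countable A] (k : ℕ) : MeasurableSet (BBset s r p k) :=
  (measurableSet_Bset k).inter <| .iInter fun j => .iInter fun _ => .iUnion fun i =>
    measurable_shift_iterate s r i (measurableSet_Bset j)

lemma BBset_subset (k : ℕ) : BBset s r p k ⊆ cylV s r (s (p.seq k)) := fun _ hx => hx.1.1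

/-- The time at which a path leaves `{y_0, …, y_k}` for ever is unique, and it increases
with `k`. -/
lemma le_of_Bset {j k i i' : ℕ} (hjk : j ≤ k) {x : PathSpace s r}
    (h : (shift s r)^[i] x ∈ Bset s r p j) (h' : (shift s r)^[i'] x ∈ Bset s r p k) :
    i ≤ i' := by
  by_contra! hlt
  have h1 := h'.2 (i - i') (by omega) j hjk
  have h2 := h.1
  rw [shift_iterate_seq] at h1 h2
  rw [show i - i' + i' = 0 + i by omega] at h1
  exact h1 h2

/-- The last exit of a path in `𝔹_k(y)` from `{y_0, …, y_j}` is the start of a path in `𝔹_j(y)`. -/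
lemma BBset_of_BBset {k j i : ℕ} (hkj : k ≤ j) {x : PathSpace s r} (hx : x ∈ BBset s r p k)
    (hi : (shift s r)^[i] x ∈ Bset s r p j) : (shift s r)^[i] x ∈ BBset s r p j := by
  rw [mem_BBset] at hx ⊢
  refine ⟨hi, fun j' hj' => ?_⟩
  obtain ⟨i', hi'⟩ := hx.2 j' (by omega)
  have hle := le_of_Bset (by omega) hi hi'
  refine ⟨i' - i, ?_⟩
  rwa [← Function.iterate_add_apply, Nat.sub_add_cancel hle]

lemma Bset_time_lt (hp : IsRay s r p) {j k i i' : ℕ} (hjk : j < k) {x : PathSpace s r}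
    (h : (shift s r)^[i] x ∈ Bset s r p j) (h' : (shift s r)^[i'] x ∈ Bset s r p k) :
    i < i' := by
  refine lt_of_le_of_ne (le_of_Bset hjk.le h h') ?_
  rintro rfl
  exact hjk.ne (hp (h.1.symm.trans h'.1))

lemma append_mem_Bset {k : ℕ} {l : List A} (hl : l ∈ Lset s r p k)
    {x : PathSpace s r} (hx : x ∈ pre s r l (Bset s r p (k + 1))) : x ∈ Bset s r p k := by
  obtain ⟨⟨hne, hch, hhead, hlast⟩, hav⟩ := hl
  obtain ⟨h1, h2⟩ := hx
  have hpos : 0 < l.length := List.length_pos_iff.2 hne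
  have hget : ∀ i (hi : i < l.length), l[i] = x.seq i := by
    intro i hi
    rw [← pref_getElem x l.length i (by simpa using hi)]
    congr 1
    exact h1.symm
  refine ⟨?_, fun i hi j hj => ?_⟩
  · rw [← hhead hne, List.head_eq_getElem, hget]
  · rcases le_or_gt i l.length with hil | hil
    · obtain ⟨i, rfl⟩ : ∃ i', i = i' + 1 := ⟨i - 1, by omega⟩
      rw [← x.compat i, ← hget i (by omega)]
      exact hav _ (List.getElem_mem _) j hj
    · have := h2.2 (i - l.length) (by omega) j (by omega)
      rwa [shift_iterate_seq, Nat.sub_add_cancel hil.le] at this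

lemma exists_pref_mem_Lset (hp : IsRay s r p) {k i : ℕ} {x : PathSpace s r}
    (hx : x ∈ Bset s r p k) (hi : (shift s r)^[i] x ∈ Bset s r p (k + 1)) :
    pref x i ∈ Lset s r p k := by
  have hpos : 0 < i := Bset_time_lt hp (Nat.lt_succ_self k) (i := 0) hx hi
  have hne : pref x i ≠ [] := by
    rw [← List.length_pos_iff]; simpa
  refine ⟨⟨hne, pref_chain x i, fun h => ?_, fun h => ?_⟩, fun a ha j hj => ?_⟩
  · rw [List.head_eq_getElem, pref_getElem]
    exact hx.1
  · have h2 := hi.1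
    rw [List.getLast_eq_getElem, pref_getElem, x.compat]
    rw [shift_iterate_seq] at h2
    rwa [pref_length, show i - 1 + 1 = 0 + i by omega]
  · simp only [pref, List.mem_map, List.mem_range] at ha
    obtain ⟨t, ht, rfl⟩ := ha
    rw [x.compat]
    exact hx.2 _ (by omega) j hj

/-- A path in `𝔹_k(y)` is uniquely a path in `L_k(y)` followed by a path in `𝔹_{k+1}(y)`. -/
lemma BBset_eq (hp : IsRay s r p) (k : ℕ) :
    BBset s r p k = ⋃ l : Lset s r p k, pre s r l.1 (BBset s r p (k + 1)) := by
  ext x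
  simp only [Set.mem_iUnion]
  constructor
  · intro hx
    obtain ⟨i, hi⟩ := (mem_BBset.1 hx).2 (k + 1) le_rfl
    refine ⟨⟨pref x i, exists_pref_mem_Lset hp hx.1 hi⟩, by simp, ?_⟩
    simpa using BBset_of_BBset (Nat.le_succ k) hx hi
  · rintro ⟨⟨l, hl⟩, hx1, hx2⟩
    have h2 := mem_BBset.1 hx2
    refine mem_BBset.2 ⟨append_mem_Bset hl ⟨hx1, h2.1⟩, fun j hj => ?_⟩
    rcases hj.eq_or_lt with rfl | hj
    · exact ⟨l.length, h2.1⟩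
    · obtain ⟨i, hi⟩ := h2.2 j hj
      exact ⟨i + l.length, by rwa [Function.iterate_add_apply]⟩

lemma pairwise_disjoint_pre (k : ℕ) :
    Pairwise (Function.onFun Disjoint
      fun l : Lset s r p k => pre s r l.1 (BBset s r p (k + 1))) := by
  rintro ⟨l, hl⟩ ⟨l', hl'⟩ hne
  refine Set.disjoint_left.2 fun x hx hx' => hne (Subtype.ext ?_)
  have : l.length = l'.length :=
    le_antisymm (le_of_Bset le_rfl hx.2.1 hx'.2.1) (le_of_Bset le_rfl hx'.2.1 hx.2.1)
  have e : pref x l.length = l := hx.1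
  have e' : pref x l'.length = l' := hx'.1
  show l = l'
  rw [← e, ← e', this]

lemma Conformal.BBset_succ [Countable A] (hm : Conformal s r F β m) (hp : IsRay s r p) (k : ℕ) :
    m (BBset s r p k) = LSum s r F β p k * m (BBset s r p (k + 1)) := by
  rw [BBset_eq hp k, measure_iUnion (pairwise_disjoint_pre k)
    (fun l => measurableSet_pre s r l.1 (measurableSet_BBset (k + 1))), LSum,
    ← ENNReal.tsum_mul_right]
  congr 1
  ext l
  exact hm.pre l.2.1 (measurableSet_BBset (k + 1)) (BBset_subset (k + 1))

lemma Conformal.BBset_zero [Countable A] (hm : Conformal s r F β m) (hp : IsRay s r p) (k : ℕ) :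
    m (BBset s r p 0) = Wprod s r F β p k * m (BBset s r p k) := by
  induction k with
  | zero => simp [Wprod]
  | succ k ih =>
    rw [ih, hm.BBset_succ hp k, Wprod, Wprod, Finset.prod_range_succ, mul_assoc]

/-- The set of the paths which eventually enter `𝔹_k(y)`. -/
def SS (s r : A → V) (p : PathSpace s r) (k : ℕ) : Set (PathSpace s r) :=
  ⋃ n : ℕ, (shift s r)^[n] ⁻¹' BBset s r p k

lemma measurableSet_SS [Countable A] (k : ℕ) : MeasurableSet (SS s r p k) :=
  .iUnion fun n => measurable_shift_iterate s r n (measurableSet_BBset k)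

lemma SS_monotone : Monotone (SS s r p) := by
  refine monotone_nat_of_le_succ fun k x hx => ?_
  simp only [SS, Set.mem_iUnion, Set.mem_preimage] at hx ⊢
  obtain ⟨n, hn⟩ := hx
  obtain ⟨i, hi⟩ := (mem_BBset.1 hn).2 (k + 1) le_rfl
  refine ⟨i + n, ?_⟩
  rw [Function.iterate_add_apply]
  exact BBset_of_BBset (Nat.le_succ k) hn hi

/-- Prefixing arrows of the ray itself turns a path in `𝔹_k(y)` into one in `𝔹_0(y)`. -/
lemma exists_BBset_zero (hp : IsRay s r p) (k : ℕ) {x : PathSpace s r}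
    (hx : x ∈ BBset s r p k) : ∃ n, ∃ z ∈ BBset s r p 0, (shift s r)^[n] z = x := by
  induction k generalizing x with
  | zero => exact ⟨0, x, hx, rfl⟩
  | succ k ih =>
    have hc : r (p.seq k) = s (x.seq 0) := by rw [p.compat k]; exact hx.1.1.symm
    have hz : consP s r (p.seq k) x hc ∈ BBset s r p k := by
      rw [BBset_eq hp k]
      refine Set.mem_iUnion.2 ⟨⟨[p.seq k], ⟨by simp, List.isChain_singleton _, by simp,
        by simp [p.compat]⟩, ?_⟩, ?_⟩
      · intro a ha i hi h
        rw [List.mem_singleton] at ha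
        subst ha
        rw [p.compat] at h
        have := hp h
        omega
      · refine ⟨?_, hx⟩
        simp [pref, consP]
    obtain ⟨n, z, hz0, hzn⟩ := ih hz
    refine ⟨n + 1, z, hz0, ?_⟩
    rw [Function.iterate_succ_apply', hzn]
    rfl

lemma BB_eq (hp : IsRay s r p) : BB s r p = ⋃ k, SS s r p k := by
  ext x
  simp only [BB, SS, Set.mem_iUnion, Set.mem_preimage, Set.mem_image]
  constructor
  · rintro ⟨n, k, z, hz, hzx⟩
    have key : ∀ j, ∃ i, j ≤ i ∧ (shift s r)^[i] z ∈ BBset s r p j := by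
      intro j
      induction j with
      | zero => exact ⟨0, le_rfl, hz⟩
      | succ j ih =>
        obtain ⟨i, hji, hi⟩ := ih
        obtain ⟨i', hi'⟩ := (mem_BBset.1 hz).2 (j + 1) (by omega)
        have := Bset_time_lt hp (Nat.lt_succ_self j) hi.1 hi'
        exact ⟨i', by omega, BBset_of_BBset (by omega) hz hi'⟩
    obtain ⟨i, hki, hi⟩ := key k
    refine ⟨k, i - k + n, ?_⟩
    rwa [Function.iterate_add_apply, ← hzx, ← Function.iterate_add_apply,
      Nat.sub_add_cancel hki]
  · rintro ⟨k, n, hn⟩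
    obtain ⟨i, z, hz, hzx⟩ := exists_BBset_zero hp k hn
    exact ⟨n, i, z, hz, hzx⟩

lemma measurableSet_BB [Countable A] (hp : IsRay s r p) : MeasurableSet (BB s r p) := by
  rw [BB_eq hp]
  exact .iUnion fun k => measurableSet_SS k

lemma Conformal.cylV_inter_SS [Countable A] (hm : Conformal s r F β m) (k : ℕ) (v : V) :
    m (cylV s r v ∩ SS s r p k) =
      Green s r F β v (s (p.seq k)) * m (BBset s r p k) := by
  rw [SS, Set.inter_iUnion, measure_iUnion, Green, ← ENNReal.tsum_mul_right]
  · congr 1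
    ext n
    exact hm.cylV_inter_iterate (measurableSet_BBset k) (BBset_subset k) n v
  · intro n n' hne
    refine Set.disjoint_left.2 fun x hx hx' => hne ?_
    exact le_antisymm (le_of_Bset le_rfl hx.2.1 hx'.2.1) (le_of_Bset le_rfl hx'.2.1 hx.2.1)
  · exact fun n => (measurableSet_cylV s r v).inter
      (measurable_shift_iterate s r n (measurableSet_BBset k))

/-- The masses of the cylinders `Z(v)` under a conformal measure concentrated on `𝔹(y)`. -/
lemma Conformal.cylV_eq [Countable A] (hm : Conformal s r F β m) (hp : IsRay s r p)
    (hmB : m (BB s r p)ᶜ = 0) (hW0 : ∀ k, Wprod s r F β p k ≠ 0)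
    (hWt : ∀ k, Wprod s r F β p k ≠ ∞) (v : V) :
    m (cylV s r v) = m (BBset s r p 0) * Vbeta s r F β v p := by
  have h1 : Tendsto (fun k => m (cylV s r v ∩ SS s r p k)) atTop (𝓝 (m (cylV s r v))) := by
    have h2 : m (cylV s r v) = m (⋃ k, cylV s r v ∩ SS s r p k) := by
      rw [← Set.inter_iUnion, ← BB_eq hp]
      exact (measure_inter_conull hmB).symm
    rw [h2]
    exact tendsto_measure_iUnion_atTop fun i j hij =>
      Set.inter_subset_inter_right _ (SS_monotone hij)
  have h3 : ∀ k, m (cylV s r v ∩ SS s r p k) = m (BBset s r p 0) *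
      (Green s r F β v (s (p.seq k)) / Wprod s r F β p k) := by
    intro k
    rw [hm.cylV_inter_SS, hm.BBset_zero hp k, div_eq_mul_inv]
    calc _ = Green s r F β v (s (p.seq k)) * m (BBset s r p k) *
          (Wprod s r F β p k * (Wprod s r F β p k)⁻¹) := by
            rw [ENNReal.mul_inv_cancel (hW0 k) (hWt k), mul_one]
      _ = _ := by ring
  have hfin : m (BBset s r p 0) ≠ ∞ :=
    ne_top_of_le_ne_top (hm.2.1 _) (measure_mono (BBset_subset 0))
  rw [← h1.limsup_eq]
  simp_rw [h3]
  rw [ENNReal.limsup_const_mul_of_ne_top hfin]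
  rfl

lemma Conformal.BBset_zero_ne [Countable A] [Countable V] (hm : Conformal s r F β m)
    (hp : IsRay s r p)
    (hmB : m (BB s r p)ᶜ = 0) (hW0 : ∀ k, Wprod s r F β p k ≠ 0)
    (hWt : ∀ k, Wprod s r F β p k ≠ ∞) : m (BBset s r p 0) ≠ 0 := by
  intro h0
  apply hm.1
  rw [← Measure.measure_univ_eq_zero]
  have : (Set.univ : Set (PathSpace s r)) = ⋃ v, cylV s r v := by
    ext x; simp [cylV]
  rw [this, measure_iUnion_null_iff]
  intro v
  rw [hm.cylV_eq hp hmB hW0 hWt v, h0, zero_mul]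

end BBsets

/-! ### The Green function as a sum over finite paths -/

section GreenSum

variable {s r : A → V} {F : A → ℝ} {β : ℝ} {p : PathSpace s r}

@[simp] lemma pull_empty (l : List A) : pull s r l ∅ = ∅ := by
  ext x; simp [pull]

lemma pull_cons_cylV (a : A) (l : List A) :
    pull s r (a :: l) (cylV s r (s a)) = pull s r l (cylV s r (r a)) := by
  rw [pull_cons]
  congr 1
  have := shift_image_inter_cylA s r a Set.univ
  rw [Set.univ_inter, Set.preimage_univ, Set.univ_inter] at this
  rw [← this]
  congr 1
  apply Set.inter_eq_self_of_subset_right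
  intro x hx
  have : x.seq 0 = a := hx
  simp [cylV, this]

lemma pull_cons_cylV_of_ne {a : A} {v : V} (h : s a ≠ v) (l : List A) :
    pull s r (a :: l) (cylV s r v) = ∅ := by
  rw [pull_cons]
  have : cylV s r v ∩ cylA s r a = ∅ := by
    ext x
    simp only [cylV, cylA, Set.mem_inter_iff, Set.mem_setOf_eq, Set.mem_empty_iff_false,
      iff_false, not_and]
    rintro h1 rfl
    exact h h1
  simp [this]

/-- The part of `tsum_list_pull` that comes from the paths of length `n`. -/
lemma tsum_ofFn_pull {w : V} (ν : Measure (PathSpace s r)) (hν : ν (cylV s r w)ᶜ = 0)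
    (n : ℕ) (v : V) :
    ∑' f : Fin n → A, wt F β (List.ofFn f) * ν (pull s r (List.ofFn f) (cylV s r v)) =
      Apow s r F β n v w * ν Set.univ := by
  induction n generalizing v with
  | zero =>
    rw [tsum_eq_single default (fun f hf => absurd (Subsingleton.elim f default) hf)]
    simp only [List.ofFn_zero, wt_nil, pull_nil, one_mul]
    by_cases h : v = w
    · subst h
      rw [← measure_inter_conull (s := Set.univ) hν]
      simp [Apow, matPow]
    · have : ν (cylV s r v) = 0 := by
        refine measure_mono_null (fun x hx => ?_) hν
        exact fun hx' => h (hx.symm.trans hx')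
      simp [Apow, matPow, this, Ne.symm h]
  | succ n ih =>
    classical
    rw [← (Fin.insertNthEquiv (fun _ => A) 0).tsum_eq, ENNReal.tsum_prod']
    have h1 : ∀ a : A, (∑' f : Fin n → A,
        wt F β (List.ofFn ((Fin.insertNthEquiv (fun _ => A) 0) (a, f))) *
          ν (pull s r (List.ofFn ((Fin.insertNthEquiv (fun _ => A) 0) (a, f)))
            (cylV s r v))) =
        ({a | s a = v} : Set A).indicator
          (fun a => wt F β [a] * Apow s r F β n (r a) w) a * ν Set.univ := by
      intro a
      have e : ∀ f : Fin n → A, List.ofFn ((Fin.insertNthEquiv (fun _ => A) 0) (a, f)) =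
          a :: List.ofFn f := by
        intro f
        simp [Fin.insertNthEquiv]
      simp_rw [e]
      by_cases h : s a = v
      · subst h
        simp_rw [pull_cons_cylV, wt_cons F β a (List.ofFn _), mul_assoc]
        rw [ENNReal.tsum_mul_left, ih]
        simp [mul_assoc]
      · simp [pull_cons_cylV_of_ne h, h]
    simp_rw [h1]
    rw [ENNReal.tsum_mul_right, ← tsum_subtype]
    congr 1
    exact (tsum_Amat_mul F β s r v (fun u => Apow s r F β n u w)).symm

/-- Prefixing all finite paths with source `v` to a measure `ν` concentrated on `Z(w)` yields
the mass `G(v,w) ν(P(Γ))`, where `G` is the Green function. -/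
lemma tsum_list_pull {w : V} (ν : Measure (PathSpace s r)) (hν : ν (cylV s r w)ᶜ = 0) (v : V) :
    ∑' l : List A, wt F β l * ν (pull s r l (cylV s r v)) =
      Green s r F β v w * ν Set.univ := by
  rw [← (List.equivSigmaTuple (α := A)).symm.tsum_eq, ENNReal.tsum_sigma', Green,
    ← ENNReal.tsum_mul_right]
  congr 1
  ext n
  exact tsum_ofFn_pull ν hν n v

lemma mem_pull_of_isPathList {l : List A} {v w : V} (hl : IsPathList s r l v w)
    {x : PathSpace s r} (hx : x ∈ cylV s r w) : x ∈ pull s r l (cylV s r v) := by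
  obtain ⟨hne, hch, hhead, hlast⟩ := hl
  induction l generalizing v with
  | nil => exact absurd rfl hne
  | cons a l ih =>
    have hv : s a = v := by simpa using hhead hne
    rw [← hv, pull_cons_cylV]
    rcases l with _ | ⟨b, l⟩
    · have : r a = w := by simpa using hlast hne
      rwa [pull_nil, this]
    · refine ih (by simp) (List.isChain_cons_cons.1 hch).2 ?_ (by simpa using hlast)
      intro _
      exact (List.isChain_cons_cons.1 hch).1.symm

/-- The paths in `L_k(y)` are among the finite paths counted by the Green function; these are
isolated by applying `tsum_list_pull` to the point mass at a path starting in `y_{k+1}`. -/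
lemma LSum_le_Green (k : ℕ) :
    LSum s r F β p k ≤ Green s r F β (s (p.seq k)) (s (p.seq (k + 1))) := by
  have hx : (shift s r)^[k + 1] p ∈ cylV s r (s (p.seq (k + 1))) := by
    show s (((shift s r)^[k + 1] p).seq 0) = _
    rw [shift_iterate_seq, zero_add]
  have h := tsum_list_pull (F := F) (β := β) (w := s (p.seq (k + 1)))
    (Measure.dirac ((shift s r)^[k + 1] p))
    (by rw [Measure.dirac_apply' _ (measurableSet_cylV s r _).compl]
        exact Set.indicator_of_notMem (Set.notMem_compl_iff.2 hx) _) (s (p.seq k))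
  rw [measure_univ, mul_one] at h
  rw [← h]
  refine le_trans (ENNReal.tsum_le_tsum fun l => ?_)
    (ENNReal.tsum_comp_le_tsum_of_injective (Subtype.val_injective (p := (· ∈ Lset s r p k)))
      fun l : List A => wt F β l *
        Measure.dirac ((shift s r)^[k + 1] p) (pull s r l (cylV s r (s (p.seq k)))))
  rw [Measure.dirac_apply_of_mem (mem_pull_of_isPathList l.2.1 hx), mul_one]
  exact le_rfl

lemma singleton_mem_Lset (hp : IsRay s r p) (k : ℕ) : [p.seq k] ∈ Lset s r p k := by
  refine ⟨⟨by simp, List.isChain_singleton _, by simp, by simp [p.compat]⟩, ?_⟩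
  intro a ha i hi h
  rw [List.mem_singleton] at ha
  subst ha
  rw [p.compat] at h
  have := hp h
  omega

lemma LSum_ne_zero (hp : IsRay s r p) (k : ℕ) : LSum s r F β p k ≠ 0 := by
  intro h
  rw [LSum, ENNReal.tsum_eq_zero] at h
  exact wt_ne_zero F β _ (h ⟨[p.seq k], singleton_mem_Lset hp k⟩)

lemma Apow_mul_le (n k : ℕ) (v u w : V) :
    Apow s r F β n v u * Apow s r F β k u w ≤ Apow s r F β (n + k) v w := by
  induction n generalizing v with
  | zero =>
    by_cases h : v = u
    · subst h
      simp [Apow, matPow]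
    · simp [Apow, matPow, Ne.symm h]
  | succ n ih =>
    rw [show n + 1 + k = (n + k) + 1 by omega]
    show (∑' x, Amat s r F β v x * Apow s r F β n x u) * _ ≤
      ∑' x, Amat s r F β v x * Apow s r F β (n + k) x w
    rw [← ENNReal.tsum_mul_right]
    refine ENNReal.tsum_le_tsum fun x => ?_
    rw [mul_assoc]
    gcongr
    exact ih x

/-- Since `v₀` reaches `v`, finiteness of `Green v₀ w` forces finiteness of `Green v w`. -/
lemma Green_ne_top {v₀ : V} (hv₀ : ∀ v : V, Green s r F β v₀ v ≠ 0 ∧ Green s r F β v₀ v ≠ ∞)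
    (v w : V) : Green s r F β v w ≠ ∞ := by
  intro htop
  obtain ⟨n, hn⟩ : ∃ n, Apow s r F β n v₀ v ≠ 0 := by
    by_contra! h
    exact (hv₀ v).1 (ENNReal.tsum_eq_zero.2 h)
  have h : Apow s r F β n v₀ v * Green s r F β v w ≤ Green s r F β v₀ w := by
    rw [Green, ← ENNReal.tsum_mul_left]
    refine (ENNReal.tsum_le_tsum fun k => Apow_mul_le n k v₀ v w).trans ?_
    exact ENNReal.tsum_comp_le_tsum_of_injective (add_right_injective n)
      fun k => Apow s r F β k v₀ w
  rw [htop, ENNReal.mul_top hn, top_le_iff] at h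
  exact (hv₀ w).2 h

lemma LSum_ne_top {v₀ : V} (hv₀ : ∀ v : V, Green s r F β v₀ v ≠ 0 ∧ Green s r F β v₀ v ≠ ∞)
    (k : ℕ) : LSum s r F β p k ≠ ∞ :=
  ne_top_of_le_ne_top (Green_ne_top hv₀ _ _) (LSum_le_Green k)

lemma Wprod_ne_zero (hp : IsRay s r p) (k : ℕ) : Wprod s r F β p k ≠ 0 :=
  Finset.prod_ne_zero_iff.2 fun j _ => LSum_ne_zero hp j

lemma Wprod_ne_top {v₀ : V} (hv₀ : ∀ v : V, Green s r F β v₀ v ≠ 0 ∧ Green s r F β v₀ v ≠ ∞)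
    (k : ℕ) : Wprod s r F β p k ≠ ∞ :=
  ENNReal.prod_ne_top fun j _ => LSum_ne_top hv₀ j

end GreenSum

/-! ### Random concatenation of paths in the sets `L_j(y)` -/

section Concat

variable {s r : A → V} {F : A → ℝ} {β : ℝ} {p : PathSpace s r}

/-- The list `ω_k ω_{k+1} ⋯ ω_{k+n-1}`. -/
def flat (ω : ∀ j, Lset s r p j) : ℕ → ℕ → List A
  | _, 0 => []
  | k, n + 1 => (ω k).1 ++ flat ω (k + 1) n

lemma flat_succ (ω : ∀ j, Lset s r p j) (k n : ℕ) :
    flat ω k (n + 1) = (ω k).1 ++ flat ω (k + 1) n := rfl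

lemma flat_prefix (ω : ∀ j, Lset s r p j) (k n : ℕ) : flat ω k n <+: flat ω k (n + 1) := by
  induction n generalizing k with
  | zero => simp [flat]
  | succ n ih =>
    rw [flat_succ, flat_succ]
    exact (List.prefix_append_right_inj _).2 (ih (k + 1))

lemma flat_prefix_le (ω : ∀ j, Lset s r p j) (k : ℕ) {n n' : ℕ} (h : n ≤ n') :
    flat ω k n <+: flat ω k n' := by
  induction n', h using Nat.le_induction with
  | base => exact List.prefix_rfl
  | succ n' _ ih => exact ih.trans (flat_prefix ω k n')

lemma le_flat_length (ω : ∀ j, Lset s r p j) (k n : ℕ) : n ≤ (flat ω k n).length := by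
  induction n generalizing k with
  | zero => simp
  | succ n ih =>
    have := List.length_pos_iff.2 (ω k).2.1.1
    have := ih (k + 1)
    rw [flat_succ, List.length_append]
    omega

lemma flat_head (ω : ∀ j, Lset s r p j) (k n : ℕ) (h : flat ω k n ≠ []) :
    s ((flat ω k n).head h) = s (p.seq k) := by
  cases n with
  | zero => exact absurd rfl h
  | succ n =>
    simp only [flat_succ]
    rw [List.head_append_of_ne_nil (ω k).2.1.1]
    exact (ω k).2.1.2.2.1 _

lemma flat_chain (ω : ∀ j, Lset s r p j) (k n : ℕ) :
    (flat ω k n).IsChain (fun a b => r a = s b) := by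
  induction n generalizing k with
  | zero => exact List.isChain_nil
  | succ n ih =>
    rw [flat_succ, List.isChain_append]
    refine ⟨(ω k).2.1.2.1, ih (k + 1), fun a ha b hb => ?_⟩
    have hne : flat ω (k + 1) n ≠ [] := by
      rintro h
      simp [h] at hb
    rw [List.getLast?_eq_getLast_of_ne_nil (ω k).2.1.1] at ha
    rw [List.head?_eq_some_head hne] at hb
    simp only [Option.mem_def, Option.some.injEq] at ha hb
    rw [← ha, ← hb]
    exact ((ω k).2.1.2.2.2 _).trans (flat_head ω (k + 1) n hne).symm

lemma flat_avoid (ω : ∀ j, Lset s r p j) (k n : ℕ) :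
    ∀ a ∈ flat ω k n, ∀ i ≤ k, r a ≠ s (p.seq i) := by
  induction n generalizing k with
  | zero => simp [flat]
  | succ n ih =>
    intro a ha i hi
    rw [flat_succ, List.mem_append] at ha
    rcases ha with ha | ha
    · exact (ω k).2.2 a ha i hi
    · exact ih (k + 1) a ha i (by omega)

/-- The infinite concatenation `ω_k ω_{k+1} ω_{k+2} ⋯`. -/
def conc (ω : ∀ j, Lset s r p j) (k : ℕ) : PathSpace s r where
  seq i := (flat ω k (i + 1))[i]'(le_flat_length ω k (i + 1))
  compat i := by
    have h : (flat ω k (i + 1))[i]'(le_flat_length ω k (i + 1)) =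
        (flat ω k (i + 2))[i]'(Nat.lt_of_succ_lt (le_flat_length ω k (i + 2))) :=
      (flat_prefix ω k (i + 1)).getElem _
    rw [h]
    exact List.isChain_iff_getElem.1 (flat_chain ω k (i + 2)) i (le_flat_length ω k (i + 2))

lemma conc_seq (ω : ∀ j, Lset s r p j) (k i n : ℕ) (h : i < (flat ω k n).length) :
    (conc ω k).seq i = (flat ω k n)[i] := by
  show (flat ω k (i + 1))[i]'(le_flat_length ω k (i + 1)) = _
  rcases le_total (i + 1) n with hn | hn
  · exact (flat_prefix_le ω k hn).getElem _
  · exact ((flat_prefix_le ω k hn).getElem _).symm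

lemma pref_conc (ω : ∀ j, Lset s r p j) (k : ℕ) :
    pref (conc ω k) (ω k).1.length = (ω k).1 := by
  have h1 : flat ω k 1 = (ω k).1 := by simp [flat]
  refine List.ext_getElem (by simp) fun i hi hi' => ?_
  rw [pref_getElem, conc_seq ω k i 1 (by rwa [h1])]
  congr 1

lemma shift_conc (ω : ∀ j, Lset s r p j) (k : ℕ) :
    (shift s r)^[(ω k).1.length] (conc ω k) = conc ω (k + 1) := by
  refine PathSpace.ext_seq fun i => ?_
  have hlt : i < (flat ω (k + 1) (i + 1)).length := le_flat_length ω (k + 1) (i + 1)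
  rw [shift_iterate_seq, conc_seq ω (k + 1) i (i + 1) hlt,
    conc_seq ω k _ (i + 2) (by rw [flat_succ, List.length_append]; omega)]
  simp only [flat_succ ω k (i + 1)]
  rw [List.getElem_append_right (by omega)]
  congr 1
  omega

lemma conc_mem_Bset (ω : ∀ j, Lset s r p j) (k : ℕ) : conc ω k ∈ Bset s r p k := by
  have hne : flat ω k 1 ≠ [] := List.length_pos_iff.1 (le_flat_length ω k 1)
  refine ⟨?_, fun i hi j hj => ?_⟩
  · rw [← flat_head ω k 1 hne, List.head_eq_getElem]
    rfl
  · obtain ⟨i, rfl⟩ : ∃ i', i = i' + 1 := ⟨i - 1, by omega⟩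
    rw [← (conc ω k).compat i]
    exact flat_avoid ω k (i + 1) _ (List.getElem_mem _) j hj

lemma conc_mem_BBset (ω : ∀ j, Lset s r p j) (k : ℕ) : conc ω k ∈ BBset s r p k := by
  have key : ∀ n, ∃ i, (shift s r)^[i] (conc ω k) = conc ω (k + n) := by
    intro n
    induction n with
    | zero => exact ⟨0, rfl⟩
    | succ n ih =>
      obtain ⟨i, hi⟩ := ih
      refine ⟨(ω (k + n)).1.length + i, ?_⟩
      rw [Function.iterate_add_apply, hi, shift_conc]
      rfl
  refine mem_BBset.2 ⟨conc_mem_Bset ω k, fun j hj => ?_⟩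
  obtain ⟨i, hi⟩ := key (j - k)
  refine ⟨i, ?_⟩
  rw [hi, show k + (j - k) = j by omega]
  exact conc_mem_Bset ω j

lemma eq_of_pref_shift {x z : PathSpace s r} {n : ℕ} (h1 : pref x n = pref z n)
    (h2 : (shift s r)^[n] x = (shift s r)^[n] z) : x = z := by
  refine PathSpace.ext_seq fun i => ?_
  rcases lt_or_ge i n with hi | hi
  · have hx : (pref x n)[i]? = some (x.seq i) := by simp [pref, hi]
    have hz : (pref z n)[i]? = some (z.seq i) := by simp [pref, hi]
    rw [h1, hz] at hx
    exact (Option.some.inj hx).symm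
  · have := congrArg (fun q : PathSpace s r => q.seq (i - n)) h2
    simpa only [shift_iterate_seq, Nat.sub_add_cancel hi] using this

lemma conc_mem_iff (ω : ∀ j, Lset s r p j) (k : ℕ) (B : Set (PathSpace s r)) :
    conc ω k ∈ B ↔ conc ω (k + 1) ∈ pull s r (ω k).1 B := by
  constructor
  · exact fun h => ⟨_, h, pref_conc ω k, shift_conc ω k⟩
  · rintro ⟨z, hz, h1, h2⟩
    have : conc ω k = z := eq_of_pref_shift ((pref_conc ω k).trans h1.symm)
      ((shift_conc ω k).trans h2.symm)
    rwa [this]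

/-- The discrete σ-algebra on `L_j(y)`. -/
local instance (j : ℕ) : MeasurableSpace (Lset s r p j) := ⊤

local instance (j : ℕ) : DiscreteMeasurableSpace (Lset s r p j) := ⟨fun _ => trivial⟩

/-- The σ-algebra on `Π_j L_j(y)` generated by the coordinates with index at least `k`. -/
@[reducible] def tailSA (p : PathSpace s r) (k : ℕ) : MeasurableSpace (∀ j, Lset s r p j) :=
  ⨆ i ∈ Set.Ici k, MeasurableSpace.comap (fun ω : ∀ j, Lset s r p j => ω i) inferInstance

lemma measurableSet_flat [Countable A] (k n k' : ℕ) (hk : k' ≤ k) (S : Set (List A)) :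
    MeasurableSet[tailSA p k'] {ω | flat ω k n ∈ S} := by
  induction n generalizing k S with
  | zero => exact @MeasurableSet.const _ (tailSA p k') ([] ∈ S)
  | succ n ih =>
    have : {ω : ∀ j, Lset s r p j | flat ω k (n + 1) ∈ S} =
        ⋃ l : Lset s r p k, {ω | ω k = l} ∩ {ω | flat ω (k + 1) n ∈ {t | l.1 ++ t ∈ S}} := by
      ext ω
      simp [flat_succ]
    rw [this]
    refine @MeasurableSet.iUnion _ _ (tailSA p k') _ _ fun l =>
      @MeasurableSet.inter _ (tailSA p k') _ _ ?_ (ih (k + 1) (by omega) _)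
    have hle : MeasurableSpace.comap (fun ω : ∀ j, Lset s r p j => ω k) inferInstance ≤
        tailSA p k' :=
      le_iSup₂_of_le (f := fun i (_ : i ∈ Set.Ici k') =>
        MeasurableSpace.comap (fun ω : ∀ j, Lset s r p j => ω i) inferInstance) k hk le_rfl
    exact hle _ ⟨{l}, trivial, rfl⟩

lemma measurable_conc [Countable A] (k : ℕ) :
    Measurable[tailSA p k] (fun ω : ∀ j, Lset s r p j => conc ω k) := by
  refine @measurable_of_seq V A s r _ _ (tailSA p k) _ fun i a => ?_
  have := measurableSet_flat (p := p) k (i + 1) k le_rfl {l | l[i]? = some a}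
  convert this using 2
  ext ω
  simp only [Set.mem_setOf_eq, conc, List.getElem?_eq_some_iff]
  exact ⟨fun h => ⟨le_flat_length ω k (i + 1), h⟩, fun ⟨_, h⟩ => h⟩

lemma tailSA_le (k : ℕ) : tailSA p k ≤ MeasurableSpace.pi :=
  iSup₂_le fun i _ => (measurable_pi_apply i).comap_le

/-- There are measures `ν_k` on `𝔹_k(y)` of total mass `1 / 𝕎_k` such that `ν_k` arises
from `ν_{k+1}` by prefixing the paths in `L_k(y)` with their weights: up to scaling, `ν_k` is the
distribution of the concatenation `ω_k ω_{k+1} ⋯` of independent random paths `ω_j ∈ L_j(y)`. -/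
lemma exists_nu [Countable A] (hL0 : ∀ j, LSum s r F β p j ≠ 0)
    (hLt : ∀ j, LSum s r F β p j ≠ ∞) :
    ∃ ν : ℕ → Measure (PathSpace s r), (∀ k, ν k Set.univ = (Wprod s r F β p k)⁻¹) ∧
      (∀ k, ν k (BBset s r p k)ᶜ = 0) ∧
      ∀ k B, MeasurableSet B →
        ν k B = ∑' l : Lset s r p k, wt F β l.1 * ν (k + 1) (pull s r l.1 B) := by
  let P : ∀ j, Measure (Lset s r p j) := fun j =>
    (LSum s r F β p j)⁻¹ • Measure.sum fun l => wt F β l.1 • Measure.dirac l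
  have hP : ∀ j, IsProbabilityMeasure (P j) := by
    intro j
    constructor
    simp only [P, Measure.smul_apply, Measure.sum_apply _ MeasurableSet.univ, measure_univ,
      smul_eq_mul, mul_one]
    exact ENNReal.inv_mul_cancel (hL0 j) (hLt j)
  have hP1 : ∀ j l, P j {l} = (LSum s r F β p j)⁻¹ * wt F β l.1 := by
    intro j l
    simp only [P, Measure.smul_apply, Measure.sum_apply _ (measurableSet_singleton l),
      smul_eq_mul]
    rw [tsum_eq_single l]
    · simp
    · intro l' hl'
      simp [hl']
  let π := Measure.infinitePi P
  have hmc : ∀ k, Measurable (fun ω : ∀ j, Lset s r p j => conc ω k) := fun k =>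
    (measurable_conc k).mono (tailSA_le k) le_rfl
  have hind : ∀ k (l : Lset s r p k) (B : Set (PathSpace s r)), MeasurableSet B →
      π ({ω | ω k = l} ∩ {ω | conc ω (k + 1) ∈ B}) =
        (LSum s r F β p k)⁻¹ * wt F β l.1 * π {ω | conc ω (k + 1) ∈ B} := by
    intro k l B hB
    have h1 : ProbabilityTheory.iIndep (fun i => MeasurableSpace.comap
        (fun ω : ∀ j, Lset s r p j => ω i) inferInstance) π :=
      ProbabilityTheory.iIndepFun_infinitePi (P := P) (X := fun i ω => ω)
        (fun i => measurable_id)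
    have h2 := ProbabilityTheory.indep_iSup_of_disjoint
      (fun i => (measurable_pi_apply i).comap_le) h1
      (S := {k}) (T := Set.Ici (k + 1)) (by simp)
    rw [ProbabilityTheory.Indep_iff] at h2
    have h3 := h2 {ω | ω k = l} {ω | conc ω (k + 1) ∈ B} (by
      rw [iSup_singleton]
      exact ⟨{l}, trivial, rfl⟩) (measurable_conc (k + 1) hB)
    rw [h3, ← hP1]
    congr 1
    have h4 := Measure.infinitePi_map_eval P k
    rw [← h4, Measure.map_apply (measurable_pi_apply k) (measurableSet_singleton l)]
    rfl
  refine ⟨fun k => (Wprod s r F β p k)⁻¹ • π.map (fun ω => conc ω k), ?_, ?_, ?_⟩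
  · intro k
    rw [Measure.smul_apply, Measure.map_apply (hmc k) MeasurableSet.univ, Set.preimage_univ,
      measure_univ, smul_eq_mul, mul_one]
  · intro k
    rw [Measure.smul_apply, Measure.map_apply (hmc k) (measurableSet_BBset k).compl]
    have : (fun ω : ∀ j, Lset s r p j => conc ω k) ⁻¹' (BBset s r p k)ᶜ = ∅ := by
      ext ω
      simp [conc_mem_BBset ω k]
    rw [this, measure_empty, smul_zero]
  · intro k B hB
    have e : (fun ω : ∀ j, Lset s r p j => conc ω k) ⁻¹' B = ⋃ l : Lset s r p k,
        {ω | ω k = l} ∩ {ω | conc ω (k + 1) ∈ pull s r l.1 B} := by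
      ext ω
      simp only [Set.mem_preimage, conc_mem_iff ω k B, Set.mem_iUnion, Set.mem_inter_iff,
        Set.mem_setOf_eq]
      exact ⟨fun h => ⟨ω k, rfl, h⟩, fun ⟨l, h, h'⟩ => h ▸ h'⟩
    rw [Measure.smul_apply, Measure.map_apply (hmc k) hB, e, measure_iUnion, smul_eq_mul,
      ← ENNReal.tsum_mul_left]
    · congr 1
      ext l
      rw [hind k l _ (measurableSet_pull s r l.1 hB), Measure.smul_apply,
        Measure.map_apply (hmc (k + 1)) (measurableSet_pull s r l.1 hB), Wprod, Wprod,
        Finset.prod_range_succ, smul_eq_mul, ENNReal.mul_inv (Or.inr (hLt k)) (Or.inr (hL0 k))]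
      simp only [Set.preimage]
      ring
    · intro l l' hne
      refine Set.disjoint_left.2 fun ω hω hω' => hne (hω.1.symm.trans hω'.1)
    · intro l
      refine MeasurableSet.inter ?_ (hmc (k + 1) (measurableSet_pull s r l.1 hB))
      exact measurable_pi_apply k (measurableSet_singleton l)

end Concat

/-! ### Existence of a conformal measure on `𝔹(y)` -/

section Existence

variable {s r : A → V} {F : A → ℝ} {β : ℝ} {p : PathSpace s r}

/-- A proper final segment of a path in `L_k(y)` does not start in `y_k`. -/
lemma Lset_eq_nil_of_append {k : ℕ} {t l : List A} (hl : l ∈ Lset s r p k)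
    (htl : t ++ l ∈ Lset s r p k) : t = [] := by
  by_contra ht
  have hch := (List.isChain_append.1 htl.1.2.1).2.2 (t.getLast ht)
    (by simp [List.getLast?_eq_getLast_of_ne_nil ht]) (l.head hl.1.1)
    (by simp [List.head?_eq_some_head hl.1.1])
  exact htl.2 (t.getLast ht) (by simp) k le_rfl (hch.trans (hl.1.2.2.1 _))

lemma append_Lset_injective (k : ℕ) :
    Function.Injective fun q : List A × Lset s r p k => q.1 ++ q.2.1 := by
  rintro ⟨l₁, l₁', h₁⟩ ⟨l₂, l₂', h₂⟩ h
  simp only [List.append_eq_append_iff] at h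
  rcases h with ⟨t, rfl, rfl⟩ | ⟨t, rfl, rfl⟩
  · obtain rfl := Lset_eq_nil_of_append h₂ h₁
    simp
  · obtain rfl := Lset_eq_nil_of_append h₁ h₂
    simp

/-- The supremum of an increasing sequence of measures is computed setwise. -/
lemma exists_measure_iSup {X : Type*} [MeasurableSpace X] (μ : ℕ → Measure X)
    (h : Monotone μ) : ∃ m : Measure X, ∀ B, MeasurableSet B → m B = ⨆ k, μ k B := by
  refine ⟨Measure.ofMeasurable (fun B _ => ⨆ k, μ k B) (by simp) ?_, fun B hB => ?_⟩
  · intro f hf hd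
    simp_rw [fun k => measure_iUnion (μ := μ k) hd hf]
    simp_rw [← lintegral_count]
    exact (lintegral_iSup (fun k => measurable_of_countable _)
      fun i j hij n => h hij (f n)).symm
  · exact Measure.ofMeasurable_apply B hB

/-- The measure obtained from `ν` by prefixing all finite paths with their weights. -/
noncomputable def spread (F : A → ℝ) (β : ℝ) (ν : Measure (PathSpace s r)) :
    Measure (PathSpace s r) :=
  Measure.sum fun l : List A => wt F β l • lpush s r l ν

lemma spread_apply [Countable A] (ν : Measure (PathSpace s r)) {B : Set (PathSpace s r)}
    (hB : MeasurableSet B) :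
    spread F β ν B = ∑' l : List A, wt F β l * ν (pull s r l B) := by
  simp [spread, Measure.sum_apply _ hB, lpush_apply s r _ _ hB]

/-- `spread ν` is conformal up to the contribution of the empty prefix. -/
lemma spread_inter_cylA [Countable A] (ν : Measure (PathSpace s r)) {B : Set (PathSpace s r)}
    (hB : MeasurableSet B) (a : A) :
    spread F β ν (B ∩ cylA s r a) = ν (B ∩ cylA s r a) +
      wt F β [a] * spread F β ν (shift s r '' (B ∩ cylA s r a)) := by
  have hBa := hB.inter (measurableSet_cylA s r a)
  have hnil : ∑' l : List A, wt F β l * ν (pull s r l (B ∩ cylA s r a)) =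
      ν (B ∩ cylA s r a) +
        ∑' q : A × List A, wt F β (q.1 :: q.2) * ν (pull s r (q.1 :: q.2) (B ∩ cylA s r a)) := by
    rw [ENNReal.tsum_eq_add_tsum_ite [], wt_nil, one_mul, pull_nil]
    congr 1
    have hinj : Function.Injective fun q : A × List A => q.1 :: q.2 := by
      rintro ⟨a, l⟩ ⟨a', l'⟩ h
      simpa using h
    refine (hinj.tsum_eq ?_).symm.trans ?_
    rotate_left
    · simp
    · intro l hl
      cases l with
      | nil => simp at hl
      | cons b l => exact ⟨(b, l), rfl⟩
  rw [spread_apply ν hBa, spread_apply ν (measurableSet_shift_image s r a hB), hnil,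
    ENNReal.tsum_prod', tsum_eq_single a, ← ENNReal.tsum_mul_left]
  · congr 2
    ext l
    rw [pull_cons, wt_cons, Set.inter_assoc, Set.inter_self, mul_assoc]
  · intro b hb
    have : B ∩ cylA s r a ∩ cylA s r b = ∅ := by
      ext x
      simp only [cylA, Set.mem_inter_iff, Set.mem_setOf_eq, Set.mem_empty_iff_false, iff_false,
        not_and]
      rintro ⟨-, rfl⟩ h
      exact hb h.symm
    simp [pull_cons, this]

/-- If `ν` arises from `ν'` by prefixing the paths in `L_k(y)`, then `spread ν` sums over those
finite paths that end with a member of `L_k(y)`, whereas `spread ν'` sums over all of them. -/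
lemma spread_le_spread [Countable A] {k : ℕ} {ν ν' : Measure (PathSpace s r)}
    (hν : ∀ B, MeasurableSet B →
      ν B = ∑' l : Lset s r p k, wt F β l.1 * ν' (pull s r l.1 B)) :
    spread F β ν ≤ spread F β ν' := by
  refine Measure.le_iff.2 fun B hB => ?_
  rw [spread_apply ν hB, spread_apply ν' hB]
  have h1 : ∀ l : List A, wt F β l * ν (pull s r l B) = ∑' l' : Lset s r p k,
      wt F β (l ++ l'.1) * ν' (pull s r (l ++ l'.1) B) := by
    intro l
    rw [hν _ (measurableSet_pull s r l hB), ← ENNReal.tsum_mul_left]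
    congr 1
    ext l'
    rw [wt_append, pull_append, mul_assoc]
  simp_rw [h1]
  rw [← ENNReal.tsum_prod (f := fun (l : List A) (l' : Lset s r p k) =>
    wt F β (l ++ l'.1) * ν' (pull s r (l ++ l'.1) B))]
  exact ENNReal.tsum_comp_le_tsum_of_injective (append_Lset_injective (p := p) k)
    fun l => wt F β l * ν' (pull s r l B)

/-- The measures `spread ν_k` increase with `k`, and their supremum is a conformal measure
concentrated on `𝔹(y)`. -/
lemma exists_conformal [Countable A] (hp : IsRay s r p) (hL0 : ∀ j, LSum s r F β p j ≠ 0)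
    (hLt : ∀ j, LSum s r F β p j ≠ ∞) (hV : ∀ v : V, Vbeta s r F β v p ≠ ∞) :
    ∃ m : Measure (PathSpace s r), Conformal s r F β m ∧ m (BB s r p)ᶜ = 0 := by
  obtain ⟨ν, hν1, hν2, hν3⟩ := exists_nu hL0 hLt
  have hmono : Monotone fun k => spread F β (ν k) :=
    monotone_nat_of_le_succ fun k => spread_le_spread (hν3 k)
  obtain ⟨m, hm⟩ := exists_measure_iSup _ hmono
  have hνV : ∀ k, ν k (cylV s r (s (p.seq k)))ᶜ = 0 := fun k =>
    measure_mono_null (Set.compl_subset_compl.2 (BBset_subset k)) (hν2 k)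
  refine ⟨m, ⟨?_, ?_, ?_⟩, ?_⟩
  · intro h0
    have h1 : m Set.univ = 0 := by simp [h0]
    have h2 : ν 0 Set.univ ≤ m Set.univ := by
      rw [hm _ MeasurableSet.univ]
      refine le_trans ?_ (le_iSup (fun k => spread F β (ν k) Set.univ) 0)
      rw [spread_apply _ MeasurableSet.univ]
      refine le_trans ?_ (ENNReal.le_tsum [])
      simp
    rw [h1, hν1] at h2
    simp [Wprod] at h2
  · intro v
    have h1 : ∀ k, spread F β (ν k) (cylV s r v) =
        Green s r F β v (s (p.seq k)) / Wprod s r F β p k := by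
      intro k
      rw [spread_apply _ (measurableSet_cylV s r v), tsum_list_pull (ν k) (hνV k) v, hν1]
      rfl
    have h2 : Tendsto (fun k => spread F β (ν k) (cylV s r v)) atTop (𝓝 (m (cylV s r v))) := by
      rw [hm _ (measurableSet_cylV s r v)]
      exact tendsto_atTop_iSup fun i j hij => hmono hij _
    simp_rw [h1] at h2
    rw [← h2.limsup_eq]
    exact hV v
  · intro a B hB
    have hBa := hB.inter (measurableSet_cylA s r a)
    -- The ray visits `s a` at most once, so the contribution of `ν_k` to `Z(a)` vanishes for
    -- large `k`.
    obtain ⟨K, hK⟩ : ∃ K, ∀ k, K ≤ k → s (p.seq k) ≠ s a := by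
      by_cases h : ∃ k, s (p.seq k) = s a
      · obtain ⟨k₀, hk₀⟩ := h
        refine ⟨k₀ + 1, fun k hk h => ?_⟩
        have := hp (h.trans hk₀.symm)
        omega
      · push Not at h
        exact ⟨0, fun k _ => h k⟩
    have h1 : ∀ k, K ≤ k → spread F β (ν k) (shift s r '' (B ∩ cylA s r a)) =
        ENNReal.ofReal (Real.exp (β * F a)) * spread F β (ν k) (B ∩ cylA s r a) := by
      intro k hk
      have h0 : ν k (B ∩ cylA s r a) = 0 := by
        have hsub : B ∩ cylA s r a ⊆ (cylV s r (s (p.seq k)))ᶜ := by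
          intro x hx hx'
          have e : x.seq 0 = a := hx.2
          have e' : s (x.seq 0) = s (p.seq k) := hx'
          exact hK k hk (by rw [← e', e])
        exact measure_mono_null hsub (hνV k)
      rw [spread_inter_cylA _ hB, h0, zero_add, ← mul_assoc, exp_mul_wt, one_mul]
    have lim : ∀ C : Set (PathSpace s r), MeasurableSet C →
        Tendsto (fun k => spread F β (ν k) C) atTop (𝓝 (m C)) := by
      intro C hC
      rw [hm C hC]
      exact tendsto_atTop_iSup fun i j hij => hmono hij _
    refine tendsto_nhds_unique (lim _ (measurableSet_shift_image s r a hB)) ?_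
    refine Tendsto.congr' (f₁ := fun k => ENNReal.ofReal (Real.exp (β * F a)) *
      spread F β (ν k) (B ∩ cylA s r a)) ?_
      (ENNReal.Tendsto.const_mul (lim _ hBa) (Or.inr ENNReal.ofReal_ne_top))
    filter_upwards [eventually_ge_atTop K] with k hk
    exact (h1 k hk).symm
  · rw [hm _ (measurableSet_BB hp).compl]
    simp only [ENNReal.iSup_eq_zero]
    intro k
    rw [spread_apply _ (measurableSet_BB hp).compl, ENNReal.tsum_eq_zero]
    intro l
    refine mul_eq_zero_of_right _ (measure_mono_null ?_ (hν2 k))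
    rintro x ⟨z, hz, -, hzx⟩ hx
    apply hz
    rw [BB_eq hp]
    refine Set.mem_iUnion.2 ⟨k, Set.mem_iUnion.2 ⟨l.length, ?_⟩⟩
    rw [Set.mem_preimage, hzx]
    exact hx

end Existence

/-! ### Uniqueness -/

/-- Both vectors of vertex masses are multiples of `Vbeta`, so the two measures agree up to
the quotient of their values on `BBset s r p 0`. -/
lemma Conformal.unique_of_BB [Countable V] [Countable A] {s r : A → V} {F : A → ℝ} {β : ℝ}
    {p : PathSpace s r} {m m' : Measure (PathSpace s r)} (hp : IsRay s r p)
    (hW0 : ∀ k, Wprod s r F β p k ≠ 0) (hWt : ∀ k, Wprod s r F β p k ≠ ∞)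
    (hm : Conformal s r F β m) (hmB : m (BB s r p)ᶜ = 0)
    (hm' : Conformal s r F β m') (hmB' : m' (BB s r p)ᶜ = 0) :
    ∃ c : ℝ≥0, 0 < c ∧ m' = (c : ℝ≥0∞) • m := by
  have h0 := hm.BBset_zero_ne hp hmB hW0 hWt
  have h0' := hm'.BBset_zero_ne hp hmB' hW0 hWt
  have ht : m (BBset s r p 0) ≠ ∞ := measure_ne_top_of_subset (BBset_subset 0) (hm.2.1 _)
  have ht' : m' (BBset s r p 0) ≠ ∞ := measure_ne_top_of_subset (BBset_subset 0) (hm'.2.1 _)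
  have hc0 : m' (BBset s r p 0) / m (BBset s r p 0) ≠ 0 := ENNReal.div_ne_zero.2 ⟨h0', ht⟩
  have hct : m' (BBset s r p 0) / m (BBset s r p 0) ≠ ∞ := ENNReal.div_ne_top ht' h0
  refine ⟨(m' (BBset s r p 0) / m (BBset s r p 0)).toNNReal, ENNReal.toNNReal_pos hc0 hct, ?_⟩
  rw [ENNReal.coe_toNNReal hct]
  refine hm.eq_smul hm' _ fun v => ?_
  rw [hm.cylV_eq hp hmB hW0 hWt, hm'.cylV_eq hp hmB' hW0 hWt, ← mul_assoc,
    ENNReal.div_mul_cancel h0 ht]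

/-- there is a nonzero `e^{βF}`-conformal measure concentrated on `𝔹(y)` if
and only if `𝕍_β(v,y) < ∞` for all `v`; when it exists it is unique up to a positive
scalar, extremal, and the vector `v ↦ m(Z(v))` is proportional to `v ↦ 𝕍_β(v,y)`. -/
theorem statement11 {V A : Type} [Countable V] [Countable A] (s r : A → V)
    (F : A → ℝ) (β : ℝ) (v₀ : V)
    (hv₀ : ∀ v : V, Green s r F β v₀ v ≠ 0 ∧ Green s r F β v₀ v ≠ ∞)
    (p : PathSpace s r) (hp : IsRay s r p) :
    ((∃ m : Measure (PathSpace s r), Conformal s r F β m ∧ m ((BB s r p)ᶜ) = 0) ↔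
      ∀ v : V, Vbeta s r F β v p ≠ ∞) ∧
    ∀ m : Measure (PathSpace s r), Conformal s r F β m → m ((BB s r p)ᶜ) = 0 →
      ExtremalConformal s r F β m ∧
      (∀ m' : Measure (PathSpace s r), Conformal s r F β m' → m' ((BB s r p)ᶜ) = 0 →
        ∃ c : ℝ≥0, 0 < c ∧ m' = (c : ℝ≥0∞) • m) ∧
      ∃ c : ℝ≥0∞, 0 < c ∧ c ≠ ∞ ∧ ∀ v : V, m (cylV s r v) = c * Vbeta s r F β v p := by
  have hW0 : ∀ k, Wprod s r F β p k ≠ 0 := Wprod_ne_zero hp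
  have hWt : ∀ k, Wprod s r F β p k ≠ ∞ := Wprod_ne_top hv₀
  refine ⟨⟨?_, fun hV => exists_conformal hp (LSum_ne_zero hp) (LSum_ne_top hv₀) hV⟩, ?_⟩
  · rintro ⟨m, hm, hmB⟩ v hv
    apply hm.2.1 v
    rw [hm.cylV_eq hp hmB hW0 hWt, hv, ENNReal.mul_top (hm.BBset_zero_ne hp hmB hW0 hWt)]
  · intro m hm hmB
    refine ⟨⟨hm, fun m' hm' hle => ?_⟩,
      fun m' hm' hmB' => hm.unique_of_BB hp hW0 hWt hmB hm' hmB',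
      m (BBset s r p 0), pos_iff_ne_zero.2 (hm.BBset_zero_ne hp hmB hW0 hWt),
      measure_ne_top_of_subset (BBset_subset 0) (hm.2.1 _), hm.cylV_eq hp hmB hW0 hWt⟩
    -- A measure dominated by `m` is again concentrated on `𝔹(y)`.
    refine hm.unique_of_BB hp hW0 hWt hmB hm' (le_antisymm ?_ zero_le)
    exact (hle _ (measurableSet_BB hp).compl).trans_eq hmB

end GraphKMS
end

section
/- Let Γ be a countable directed graph, F a potential and β ∈ ℝ, and assume there is a vertex v₀ with 0 < Σ_{n=0}^∞ A(β)^n_{v₀,v} < ∞ for all v ∈ Γ_V. Let m be an extremal e^{βF}-conformal measure on P(Γ). Then there is a wandering path p such that m is concentrated on the end E = {q ∈ Wan(Γ) : q ∼ p}, i.e. m(P(Γ) \ E) = 0. -/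
/-!
Extremality of `m` makes it ergodic: for a measurable shift-invariant set `B` the restriction
of `m` to `B` is again conformal or zero, so `m B = 0` or `m Bᶜ = 0` (`zero_one`).

Conformality gives `m (Z(v) ∩ σ⁻ⁿ Z(w)) = A(β)ⁿ_{v,w} m (Z(w))` (`measure_visit`). Hence
`m (Z(v₀)) ≠ 0` for every conformal measure, and by Borel-Cantelli the paths in `Z(v₀)` visiting
`w` infinitely often form a null set. Applying the first fact to the restriction of `m` to the
invariant set of paths visiting `w` infinitely often shows that this whole set is null, so almost
every path is wandering.

For a vertex `u` and a finite set `F₀`, let `D(u, F₀)` be the set of paths infinitely many of whose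
vertices can be reached from `u` by a finite path avoiding `F₀`. It is shift-invariant, hence null
or conull, and there are countably many such sets; so almost every `q` lies exactly in those
`D(u, F₀)` that are conull. If `p` and `q` are two such typical wandering paths, then for large
`n` the path `p` itself witnesses `p ∈ D(s(p_n), F₀)`, so this set is conull and
contains `q`, which gives `p → q`. By symmetry `p ∼ q`, so almost every path is equivalent to any
typical `p`.
-/

open MeasureTheory Filter Topology
open scoped ENNReal NNReal

namespace GraphKMS

variable {V A : Type}

/-! ### Measurability and conformality -/

section Basics

variable {s r : A → V}

lemma measurableSet_coord (n : ℕ) (S : Set A) :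
    MeasurableSet {q : PathSpace s r | q.seq n ∈ S} := by
  refine ⟨{x : ℕ → A | x n ∈ S}, ?_, rfl⟩
  let _ : MeasurableSpace A := ⊤
  exact (measurable_pi_apply (X := fun _ : ℕ => A) n)
    (MeasurableSpace.measurableSet_top (s := S))

/-- The paths whose vertices lie in `S` infinitely often. -/
def visitsIO (s r : A → V) (S : Set V) : Set (PathSpace s r) :=
  {q | ∃ᶠ n in atTop, s (q.seq n) ∈ S}

lemma measurableSet_visitsIO (S : Set V) : MeasurableSet (visitsIO s r S) := by
  have h : visitsIO s r S = ⋂ N : ℕ, ⋃ n : ℕ, ⋃ _ : N ≤ n,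
      {q : PathSpace s r | q.seq n ∈ s ⁻¹' S} := by
    ext q
    simp [visitsIO, frequently_atTop]
  rw [h]
  exact MeasurableSet.iInter fun N => MeasurableSet.iUnion fun n =>
    MeasurableSet.iUnion fun _ => measurableSet_coord n _

lemma shift_mem_visitsIO (S : Set V) (q : PathSpace s r) :
    shift s r q ∈ visitsIO s r S ↔ q ∈ visitsIO s r S := by
  simp only [visitsIO, Set.mem_ofPred_eq, frequently_atTop, shift]
  constructor
  · intro h N
    obtain ⟨n, hn, hq⟩ := h N
    exact ⟨n + 1, by omega, hq⟩
  · intro h N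
    obtain ⟨n, hn, hq⟩ := h (N + 1)
    obtain ⟨k, rfl⟩ : ∃ k, n = k + 1 := ⟨n - 1, by omega⟩
    exact ⟨k, by omega, hq⟩

variable {F : A → ℝ} {β : ℝ} {m : Measure (PathSpace s r)}

lemma Conformal.restrict (hm : Conformal s r F β m) {B : Set (PathSpace s r)}
    (hB : MeasurableSet B) (hinv : ∀ q, shift s r q ∈ B ↔ q ∈ B) (h0 : m B ≠ 0) :
    Conformal s r F β (m.restrict B) := by
  refine ⟨fun h => h0 (Measure.restrict_eq_zero.1 h), fun v => ?_, fun a C hC => ?_⟩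
  · exact ne_top_of_le_ne_top (hm.2.1 v) (Measure.restrict_apply_le _ _)
  · rw [Measure.restrict_apply' hB, Measure.restrict_apply' hB]
    have h1 : shift s r '' (C ∩ cylA s r a) ∩ B = shift s r '' ((C ∩ B) ∩ cylA s r a) := by
      ext q
      constructor
      · rintro ⟨⟨x, ⟨hx, hxa⟩, rfl⟩, hq⟩
        exact ⟨x, ⟨⟨hx, (hinv x).1 hq⟩, hxa⟩, rfl⟩
      · rintro ⟨x, ⟨⟨hx, hxB⟩, hxa⟩, rfl⟩
        exact ⟨⟨x, ⟨hx, hxa⟩, rfl⟩, (hinv x).2 hxB⟩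
    rw [h1, hm.2.2 a _ (hC.inter hB), Set.inter_right_comm]

/-- Extremal conformal measures are ergodic for the shift. -/
lemma zero_one (hm : ExtremalConformal s r F β m) {B : Set (PathSpace s r)}
    (hB : MeasurableSet B) (hinv : ∀ q, shift s r q ∈ B ↔ q ∈ B) (h0 : m B ≠ 0) :
    m Bᶜ = 0 := by
  obtain ⟨c, hc, h⟩ := hm.2 _ (hm.1.restrict hB hinv h0)
    (fun C _ => Measure.restrict_apply_le _ _)
  have h1 : m.restrict B Bᶜ = 0 := by simp [Measure.restrict_apply' hB]
  rw [h] at h1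
  simpa [hc.ne'] using h1

/-! ### Visits to vertices and the Green function -/

/-- The paths in `Z(v)` whose `n`-th vertex is `w`, i.e. `Z(v) ∩ σ⁻ⁿ(Z(w))`. -/
def visit (s r : A → V) (n : ℕ) (v w : V) : Set (PathSpace s r) :=
  {q | s (q.seq 0) = v ∧ s (q.seq n) = w}

lemma measurableSet_visit (n : ℕ) (v w : V) : MeasurableSet (visit s r n v w) :=
  (measurableSet_coord 0 (s ⁻¹' {v})).inter (measurableSet_coord n (s ⁻¹' {w}))

/-- Prefixing the arrow `a` scales a set of paths starting at `r a` by `e^{-βF(a)}`. -/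
lemma measure_cons_arrow (hm : Conformal s r F β m) (a : A) {C : Set (PathSpace s r)}
    (hCm : MeasurableSet (shift s r ⁻¹' C)) (hC : ∀ q ∈ C, s (q.seq 0) = r a) :
    m (shift s r ⁻¹' C ∩ cylA s r a) = ENNReal.ofReal (Real.exp (-(β * F a))) * m C := by
  have himg : shift s r '' (shift s r ⁻¹' C ∩ cylA s r a) = C := by
    ext q
    constructor
    · rintro ⟨x, ⟨hx, -⟩, rfl⟩
      exact hx
    · intro hq
      let x : ℕ → A := fun i => Nat.casesOn i a q.seq
      have hx : ∀ i, r (x i) = s (x (i + 1)) := by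
        intro i
        cases i with
        | zero => exact (hC q hq).symm
        | succ i => exact q.compat i
      exact ⟨⟨x, hx⟩, ⟨hq, rfl⟩, rfl⟩
  have h := hm.2.2 a _ hCm
  rw [himg] at h
  rw [h, ← mul_assoc, ← ENNReal.ofReal_mul (Real.exp_pos _).le, ← Real.exp_add]
  simp

lemma measure_visit [Countable V] [Countable A] (hm : Conformal s r F β m) (n : ℕ) (v w : V) :
    m (visit s r n v w) = Apow s r F β n v w * m (cylV s r w) := by
  induction n generalizing v with
  | zero =>
    by_cases h : w = v
    · subst h
      simp [Apow, matPow, visit, cylV]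
    · have : visit s r 0 v w = ∅ := by
        ext q
        simp only [visit, Set.mem_ofPred_eq, Set.mem_empty_iff_false, iff_false, not_and]
        rintro h1 h2
        exact h (h2.symm.trans h1)
      simp [this, Apow, matPow, h]
  | succ n ih =>
    have hpre : ∀ u, shift s r ⁻¹' visit s r n u w =
        {q : PathSpace s r | q.seq 1 ∈ s ⁻¹' {u}} ∩ {q | q.seq (n + 1) ∈ s ⁻¹' {w}} :=
      fun u => rfl
    have hpm : ∀ u, MeasurableSet (shift s r ⁻¹' visit s r n u w) := fun u => by
      rw [hpre]
      exact (measurableSet_coord _ _).inter (measurableSet_coord _ _)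
    have hcyl : ∀ a, MeasurableSet (cylA s r a) := fun a => measurableSet_coord 0 {a}
    have hdec : visit s r (n + 1) v w = ⋃ u : V, ⋃ a : {a : A // s a = v ∧ r a = u},
        (shift s r ⁻¹' visit s r n u w ∩ cylA s r a.1) := by
      ext q
      simp only [visit, shift, cylA, Set.mem_iUnion, Set.mem_inter_iff, Set.mem_preimage,
        Set.mem_ofPred_eq]
      constructor
      · rintro ⟨h1, h2⟩
        exact ⟨_, ⟨q.seq 0, h1, rfl⟩, ⟨(q.compat 0).symm, h2⟩, rfl⟩
      · rintro ⟨u, ⟨a, ha, -⟩, ⟨-, h2⟩, rfl⟩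
        exact ⟨ha, h2⟩
    rw [hdec, measure_iUnion]
    · change _ = (∑' u : V, Amat s r F β v u * Apow s r F β n u w) * _
      rw [← ENNReal.tsum_mul_right]
      refine tsum_congr fun u => ?_
      rw [measure_iUnion]
      · rw [mul_assoc, ← ih u, Amat, ← ENNReal.tsum_mul_right]
        refine tsum_congr fun a => ?_
        refine measure_cons_arrow hm a.1 (hpm u) fun q hq => ?_
        rw [a.2.2]
        exact hq.1
      · intro a b hab
        refine Set.disjoint_left.2 fun q h1 h2 => hab (Subtype.ext ?_)
        exact h1.2.symm.trans h2.2
      · exact fun a => (hpm u).inter (hcyl _)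
    · intro u u' huu
      refine Set.disjoint_left.2 fun q h1 h2 => huu ?_
      simp only [Set.mem_iUnion] at h1 h2
      obtain ⟨a, h1, -⟩ := h1
      obtain ⟨b, h2, -⟩ := h2
      exact h1.1.symm.trans h2.1
    · exact fun u => MeasurableSet.iUnion fun a => (hpm u).inter (hcyl _)

lemma measure_base_ne_zero [Countable V] [Countable A] {v₀ : V}
    (hv₀ : ∀ v : V, Green s r F β v₀ v ≠ 0) (hm : Conformal s r F β m) :
    m (cylV s r v₀) ≠ 0 := by
  intro h0
  apply hm.1
  have hz : ∀ w, m (cylV s r w) = 0 := by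
    intro w
    by_contra hw
    apply hv₀ w
    rw [Green, ENNReal.tsum_eq_zero]
    intro n
    have h := measure_visit hm n v₀ w
    rw [measure_mono_null (fun q hq => hq.1) h0] at h
    exact (mul_eq_zero.1 h.symm).resolve_right hw
  rw [← Measure.measure_univ_eq_zero]
  have : (Set.univ : Set (PathSpace s r)) = ⋃ w, cylV s r w := by
    ext q
    simp [cylV]
  rw [this]
  exact measure_iUnion_null hz

/-- Transience: finiteness of the Green function forces almost every path to visit each vertex
only finitely often. -/
lemma measure_visitsIO_singleton [Countable V] [Countable A] {v₀ : V}
    (hv₀ : ∀ v : V, Green s r F β v₀ v ≠ 0 ∧ Green s r F β v₀ v ≠ ∞)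
    (hm : Conformal s r F β m) (w : V) : m (visitsIO s r {w}) = 0 := by
  by_contra h
  have hr := hm.restrict (measurableSet_visitsIO {w}) (shift_mem_visitsIO {w}) h
  refine measure_base_ne_zero (fun v => (hv₀ v).1) hr ?_
  rw [Measure.restrict_apply' (measurableSet_visitsIO {w})]
  have hsum : ∑' n, m (visit s r n v₀ w) ≠ ∞ := by
    simp_rw [measure_visit hm, ENNReal.tsum_mul_right]
    exact ENNReal.mul_ne_top (hv₀ w).2 (hm.2.1 w)
  refine measure_mono_null ?_ (measure_setOfPred_frequently_eq_zero hsum)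
  rintro q ⟨h1, h2⟩
  exact Frequently.mono h2 fun n hn => ⟨h1, hn⟩

lemma ae_wandering [Countable V] [Countable A] {v₀ : V}
    (hv₀ : ∀ v : V, Green s r F β v₀ v ≠ 0 ∧ Green s r F β v₀ v ≠ ∞)
    (hm : Conformal s r F β m) : ∀ᵐ q ∂m, Wandering s r q := by
  have h : ∀ᵐ q ∂m, ∀ w, q ∉ visitsIO s r {w} :=
    ae_all_iff.2 fun w => measure_eq_zero_iff_ae_notMem.1 (measure_visitsIO_singleton hv₀ hm w)
  filter_upwards [h] with q hq F₀
  have h1 : ∀ᶠ n in atTop, ∀ w ∈ F₀, s (q.seq n) ≠ w := by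
    rw [Filter.eventually_all_finset]
    exact fun w _ => not_frequently.1 (hq w)
  obtain ⟨N, hN⟩ := eventually_atTop.1 h1
  exact ⟨N, fun i hi hmem => hN i hi _ hmem rfl⟩

/-! ### Reachability outside a finite set -/

/-- The vertices that can be reached from `u` by a finite path avoiding `F₀`. -/
def reach (s r : A → V) (F₀ : Finset V) (u : V) : Set V :=
  {w | ∃ μ : FinPath s r, μ.src = u ∧ finRng s r μ = w ∧ ∀ v ∈ finVerts s r μ, v ∉ F₀}

lemma self_mem_reach {F₀ : Finset V} {u : V} (hu : u ∉ F₀) : u ∈ reach s r F₀ u := by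
  refine ⟨⟨u, [], fun h => absurd rfl h, List.isChain_nil⟩, rfl, rfl, ?_⟩
  simpa [finVerts] using hu

lemma reach_step {F₀ : Finset V} {u : V} {a : A} (h : s a ∈ reach s r F₀ u) (ha : r a ∉ F₀) :
    r a ∈ reach s r F₀ u := by
  obtain ⟨⟨x, l, h1, h2⟩, rfl, h3, h4⟩ := h
  simp only [finRng] at h3
  have hsa : s a ∉ F₀ := by
    apply h4
    rw [← h3]
    rcases List.eq_nil_or_concat l with rfl | ⟨l', b, rfl⟩
    · simp [finVerts]
    · simp [finVerts]
  refine ⟨⟨x, l ++ [a], ?_, ?_⟩, rfl, by simp [finRng], ?_⟩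
  · intro _
    rcases l with _ | ⟨b, l⟩
    · simpa using h3.symm
    · simpa using h1
  · refine List.isChain_append.2 ⟨h2, by simp, ?_⟩
    intro b hb c hc
    simp only [List.head?_cons, Option.mem_def, Option.some.injEq] at hc hb
    subst hc
    simpa [hb] using h3
  · intro v hv
    simp only [finVerts, List.mem_append, List.mem_singleton, Set.mem_union, Set.mem_ofPred_eq,
      Set.mem_singleton_iff] at hv h4
    rcases hv with rfl | ⟨b, hb | rfl, hv⟩
    · exact h4 _ (Or.inl rfl)
    · exact h4 _ (Or.inr ⟨b, hb, hv⟩)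
    · rcases hv with rfl | rfl
      · exact hsa
      · exact ha

/-- A path that stays outside `F₀` from time `n` on witnesses that its `n`-th vertex reaches
infinitely many of its vertices. -/
lemma mem_visitsIO_reach {F₀ : Finset V} {p : PathSpace s r} {n : ℕ}
    (h : ∀ i, n ≤ i → s (p.seq i) ∉ F₀) :
    p ∈ visitsIO s r (reach s r F₀ (s (p.seq n))) := by
  refine Eventually.frequently (eventually_atTop.2 ⟨n, fun k hk => ?_⟩)
  induction k, hk using Nat.le_induction with
  | base => exact self_mem_reach (h n le_rfl)
  | succ k hk ih =>
    have h1 := h (k + 1) (by omega)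
    rw [← p.compat k] at h1 ⊢
    exact reach_step ih h1

/-- A wandering path `p` leads to `q` as soon as `q` lies in every set `D(u, F₀)` containing `p`. -/
lemma leads_of_visitsIO {p q : PathSpace s r} (hp : Wandering s r p)
    (h : ∀ (F₀ : Finset V) (u : V), p ∈ visitsIO s r (reach s r F₀ u) →
      q ∈ visitsIO s r (reach s r F₀ u)) : Leads s r p q := by
  intro F₀ N
  obtain ⟨M, hM⟩ := hp F₀
  have h1 := h F₀ _ (mem_visitsIO_reach (n := max N M)
    fun i hi => hM i ((le_max_right _ _).trans hi))
  obtain ⟨n₂, hn₂, hq⟩ := frequently_atTop.1 h1 N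
  exact ⟨max N M, n₂, le_max_left _ _, hn₂, hq⟩

end Basics

/-- every extremal `e^{βF}`-conformal measure is concentrated on an end,
i.e. on the `∼`-equivalence class of some wandering path. -/
theorem statement12 {V A : Type} [Countable V] [Countable A] (s r : A → V)
    (F : A → ℝ) (β : ℝ) (v₀ : V)
    (hv₀ : ∀ v : V, Green s r F β v₀ v ≠ 0 ∧ Green s r F β v₀ v ≠ ∞)
    (m : Measure (PathSpace s r)) (hm : ExtremalConformal s r F β m) :
    ∃ p : PathSpace s r, Wandering s r p ∧
      m {q : PathSpace s r |
        ¬ (Wandering s r q ∧ Leads s r q p ∧ Leads s r p q)} = 0 := by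
  -- typical paths: wandering, and lying in exactly the sets `D(u, F₀)` of positive measure
  have htyp : ∀ᵐ q ∂m, Wandering s r q ∧ ∀ (F₀ : Finset V) (u : V),
      q ∈ visitsIO s r (reach s r F₀ u) ↔ m (visitsIO s r (reach s r F₀ u)) ≠ 0 := by
    refine (ae_wandering hv₀ hm.1).and ?_
    refine ae_all_iff.2 fun F₀ => ae_all_iff.2 fun u => ?_
    by_cases h0 : m (visitsIO s r (reach s r F₀ u)) = 0
    · filter_upwards [measure_eq_zero_iff_ae_notMem.1 h0] with q hq
      simp [h0, hq]
    · have h1 := zero_one hm (measurableSet_visitsIO _) (shift_mem_visitsIO _) h0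
      filter_upwards [measure_eq_zero_iff_ae_notMem.1 h1] with q hq
      simpa [h0] using hq
  have hne : (ae m).NeBot := ae_neBot.2 hm.1.1
  obtain ⟨p, hp, hpD⟩ := htyp.exists
  refine ⟨p, hp, ?_⟩
  change ∀ᵐ q ∂m, _
  filter_upwards [htyp] with q hq
  exact ⟨hq.1, leads_of_visitsIO hq.1 fun F₀ u h => (hpD F₀ u).2 ((hq.2 F₀ u).1 h),
    leads_of_visitsIO hp fun F₀ u h => (hq.2 F₀ u).2 ((hpD F₀ u).1 h)⟩

end GraphKMS
end

section
/- Let Γ be a countable directed graph, F a potential and β ∈ ℝ, and assume Σ_{n=0}^∞ A(β)^n_{v,w} < ∞ for all v, w ∈ Γ_V. Fix a vertex v₀ and let B(β) be the matrix obtained from A(β) by setting B(β)_{v,v₀} = 0 for all v and B(β)_{v,w} = A(β)_{v,w} for w ≠ v₀. Then R_{βF}(v₀,v₀) < 1, R_{βF}(v,v₀) ≤ φ_v for every v₀-normalized A(β)-harmonic vector φ and all v, and the map φ ↦ ψ given by ψ_v = (1 − R_{βF}(v₀,v₀))⁻¹ (φ_v − R_{βF}(v,v₀)) is a bijection from the set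 of v₀-normalized A(β)-harmonic vectors onto the set of v₀-normalized B(β)-harmonic vectors which, together with its inverse, is affine and continuous for the topology of pointwise convergence. -/
/-!
Write `R_v = R_{βF}(v,v₀)`. Decomposing a simple path after its first arrow gives
`R = A(β)_{·,v₀} + B(β) R` (`Rsum_rec`), and truncating by path length shows that `R` is the least
`[0,∞]`-valued supersolution of this equation (`Rsum_le`). A `v₀`-normalized `A(β)`-harmonic `φ`
satisfies `φ = A(β)_{·,v₀} + B(β) φ`, hence `R ≤ φ`. The Green function `G = Σₙ A(β)ⁿ_{·,v₀}`
satisfies `G = δ_{v₀} + A(β) G` (`Green_rec`), so `G / G(v₀)` is a supersolution too; therefore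
`R` is finite, and evaluating at `v₀` gives `R_{v₀} ≤ (G(v₀) - 1) / G(v₀) < 1`.

Subtracting the two equations shows that `φ - R` is `B(β)`-harmonic, and
`ψ ↦ (1 - R_{v₀}) ψ + R` is the inverse map; affinity and continuity are read off the formulas.
-/

open MeasureTheory Filter Topology
open scoped ENNReal NNReal

namespace GraphKMS

variable {V A : Type}

/-! ### First-arrow decomposition of simple paths -/

/-- The weight `e^{-βF(l)}` of a list of arrows, as an extended nonnegative real. -/
noncomputable def listWt (F : A → ℝ) (β : ℝ) (l : List A) : ℝ≥0∞ :=
  ENNReal.ofReal (Real.exp (-(β * (l.map F).sum)))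

open Classical in
/-- The contribution of the list `l` to `R_{βF}(v,w)`: its weight if it is a simple path from
`v` to `w`, and `0` otherwise. -/
noncomputable def simpleWt (s r : A → V) (F : A → ℝ) (β : ℝ) (w v : V) (l : List A) : ℝ≥0∞ :=
  if IsSimplePath s r v w l then listWt F β l else 0

open Classical in
/-- `simpleWt` cut off at length `n`. -/
noncomputable def simpleWtLE (s r : A → V) (F : A → ℝ) (β : ℝ) (w : V) (n : ℕ) (v : V)
    (l : List A) : ℝ≥0∞ :=
  if l.length ≤ n then simpleWt s r F β w v l else 0

lemma listWt_cons (F : A → ℝ) (β : ℝ) (a : A) (l : List A) :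
    listWt F β (a :: l) = ENNReal.ofReal (Real.exp (-(β * F a))) * listWt F β l := by
  unfold listWt
  rw [← ENNReal.ofReal_mul (Real.exp_pos _).le, ← Real.exp_add, List.map_cons, List.sum_cons]
  congr 2
  ring

/-- First-arrow decomposition of simple paths. -/
lemma isSimplePath_cons (s r : A → V) (v w : V) (a : A) (l : List A) :
    IsSimplePath s r v w (a :: l) ↔
      s a = v ∧ ((r a = w ∧ l = []) ∨ (r a ≠ w ∧ IsSimplePath s r (r a) w l)) := by
  cases l with
  | nil => simp [IsSimplePath, IsPathList, List.Chain']
  | cons b l =>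
    simp only [IsSimplePath, IsPathList, List.Chain', List.isChain_cons_cons]
    simp
    constructor
    · rintro ⟨⟨⟨h1, h2⟩, h3, h4⟩, h5, h6⟩
      exact ⟨h3, h5, ⟨h2, h1.symm, h4⟩, h6⟩
    · rintro ⟨h3, h5, ⟨h2, h1, h4⟩, h6⟩
      exact ⟨⟨⟨h1.symm, h2⟩, h3, h4⟩, h5, h6⟩

open Classical in
lemma simpleWt_cons (s r : A → V) (F : A → ℝ) (β : ℝ) (v w : V) (a : A) (l : List A) :
    simpleWt s r F β w v (a :: l) =
      if s a = v then ENNReal.ofReal (Real.exp (-(β * F a))) *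
        (if r a = w then (if l = [] then 1 else 0) else simpleWt s r F β w (r a) l) else 0 := by
  unfold simpleWt
  rw [isSimplePath_cons, listWt_cons]
  by_cases h1 : s a = v <;> by_cases h2 : r a = w <;> by_cases h3 : l = [] <;>
    simp [h1, h2, h3, listWt]

open Classical in
/-- Summing over arrows out of `v` is the same as summing the matrix entries over vertices. -/
lemma tsum_arrow_eq (s r : A → V) (F : A → ℝ) (β : ℝ) (v : V) (f : V → ℝ≥0∞) :
    (∑' a : A, if s a = v then ENNReal.ofReal (Real.exp (-(β * F a))) * f (r a) else 0) =
      ∑' u : V, Amat s r F β v u * f u := by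
  have h : ∀ a : A, (if s a = v then ENNReal.ofReal (Real.exp (-(β * F a))) * f (r a) else 0) =
      ∑' u : V, {a : A | s a = v ∧ r a = u}.indicator
        (fun a => ENNReal.ofReal (Real.exp (-(β * F a)))) a * f u := by
    intro a
    rw [tsum_eq_single (r a)]
    · by_cases h1 : s a = v <;> simp [h1]
    · intro u hu
      simp [Ne.symm hu]
  simp_rw [h]
  rw [ENNReal.tsum_comm]
  refine tsum_congr fun u => ?_
  rw [ENNReal.tsum_mul_right]
  congr 1
  exact (tsum_subtype {a : A | s a = v ∧ r a = u}
    (fun a => ENNReal.ofReal (Real.exp (-(β * F a))))).symm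

lemma tsum_list (f : List A → ℝ≥0∞) (h0 : f [] = 0) :
    ∑' l, f l = ∑' a, ∑' l, f (a :: l) := by
  rw [← ENNReal.tsum_prod]
  have hinj : Function.Injective (fun p : A × List A => p.1 :: p.2) := by
    rintro ⟨a, l⟩ ⟨b, m⟩ h
    simpa using h
  refine (hinj.tsum_eq ?_).symm
  intro l hl
  cases l with
  | nil => exact absurd h0 hl
  | cons a l => exact ⟨(a, l), rfl⟩

open Classical in
/-- First-arrow decomposition at the level of sums, for a weight `h` that is related to a weight
`h'` on tails; it serves both the full sum `R_{βF}(v,w)` and its truncations. -/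
lemma tsum_first_arrow (s r : A → V) (F : A → ℝ) (β : ℝ) (w v : V)
    (h : List A → ℝ≥0∞) (h' : V → List A → ℝ≥0∞) (h0 : h [] = 0)
    (hc : ∀ a l, h (a :: l) = if s a = v then ENNReal.ofReal (Real.exp (-(β * F a))) *
        (if r a = w then (if l = [] then 1 else 0) else h' (r a) l) else 0) :
    ∑' l, h l = ∑' u : V, Amat s r F β v u * (if u = w then 1 else ∑' l, h' u l) := by
  rw [tsum_list h h0, ← tsum_arrow_eq s r F β v (fun u => if u = w then 1 else ∑' l, h' u l)]
  refine tsum_congr fun a => ?_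
  simp_rw [hc]
  by_cases h1 : s a = v
  · simp only [h1, if_true]
    rw [ENNReal.tsum_mul_left]
    congr 1
    by_cases h2 : r a = w
    · simp [h2, tsum_ite_eq]
    · simp [h2]
  · simp [h1]

/-! ### `R_{βF}(·,w)` as a least supersolution -/

lemma simpleWt_nil (s r : A → V) (F : A → ℝ) (β : ℝ) (v w : V) :
    simpleWt s r F β w v [] = 0 := by
  simp [simpleWt, IsSimplePath, IsPathList]

lemma Rsum_eq_tsum (s r : A → V) (F : A → ℝ) (β : ℝ) (v w : V) :
    Rsum s r F β v w = ∑' l, simpleWt s r F β w v l := by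
  classical
  unfold Rsum
  refine (tsum_subtype {l : List A | IsSimplePath s r v w l} (listWt F β)).trans ?_
  refine tsum_congr fun l => ?_
  simp [simpleWt, Set.indicator_apply]

open Classical in
/-- `x = R_{βF}(·,w)` solves `x_v = A_{v,w} + Σ_{u ≠ w} A_{v,u} x_u`. -/
lemma Rsum_rec (s r : A → V) (F : A → ℝ) (β : ℝ) (v w : V) :
    Rsum s r F β v w =
      ∑' u : V, Amat s r F β v u * (if u = w then 1 else Rsum s r F β u w) := by
  simp_rw [Rsum_eq_tsum]
  exact tsum_first_arrow s r F β w v _ _ (simpleWt_nil s r F β v w)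
    (fun a l => simpleWt_cons s r F β v w a l)

open Classical in
/-- `R_{βF}(·,w)` is the least supersolution of its recursion. -/
lemma Rsum_le (s r : A → V) (F : A → ℝ) (β : ℝ) (w : V) (φ : V → ℝ≥0∞)
    (hφ : ∀ v, ∑' u : V, Amat s r F β v u * (if u = w then 1 else φ u) ≤ φ v) (v : V) :
    Rsum s r F β v w ≤ φ v := by
  have key : ∀ n v, ∑' l, simpleWtLE s r F β w n v l ≤ φ v := by
    intro n
    induction n with
    | zero =>
      intro v
      have : ∀ l, simpleWtLE s r F β w 0 v l = 0 := by
        intro l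
        cases l <;> simp [simpleWtLE, simpleWt_nil]
      simp [this]
    | succ n ih =>
      intro v
      refine le_trans ?_ (hφ v)
      rw [tsum_first_arrow s r F β w v _ (simpleWtLE s r F β w n)
        (by simp [simpleWtLE, simpleWt_nil]) (fun a l => ?_)]
      · refine ENNReal.tsum_le_tsum fun u => ?_
        gcongr
        split_ifs
        · exact le_rfl
        · exact ih u
      · unfold simpleWtLE
        rw [simpleWt_cons]
        by_cases h1 : s a = v <;> by_cases h2 : r a = w <;> by_cases h3 : l.length ≤ n <;>
          simp [h1, h2, h3]
        rintro rfl
        simp at h3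
  rw [Rsum_eq_tsum, ENNReal.tsum_eq_iSup_sum]
  refine iSup_le fun S => ?_
  refine le_trans ?_ (key (S.sup List.length) v)
  refine le_trans (Finset.sum_le_sum fun l hl => ?_) (ENNReal.sum_le_tsum S)
  have : l.length ≤ S.sup List.length := Finset.le_sup (f := List.length) hl
  simp [simpleWtLE, this]

/-! ### The Green function and the column of `v₀` -/

lemma Green_rec (s r : A → V) (F : A → ℝ) (β : ℝ) (v w : V) :
    Green s r F β v w = ({v} : Set V).indicator (fun _ => (1 : ℝ≥0∞)) w +
      ∑' u : V, Amat s r F β v u * Green s r F β u w := by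
  unfold Green
  rw [tsum_eq_zero_add' ENNReal.summable]
  congr 1
  simp_rw [← ENNReal.tsum_mul_left]
  rw [ENNReal.tsum_comm]
  rfl

open Classical in
/-- Splitting off the column `v₀` from a matrix-vector product. -/
lemma tsum_split (M Bm : V → V → ℝ≥0∞) (v₀ : V)
    (hBm : ∀ v w : V, Bm v w = if w = v₀ then 0 else M v w) (f : V → ℝ≥0∞) (v : V) :
    ∑' w, M v w * f w = M v v₀ * f v₀ + ∑' w, Bm v w * f w := by
  rw [← tsum_ite_eq v₀ (fun w => M v w * f w), ← ENNReal.tsum_add]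
  refine tsum_congr fun w => ?_
  rw [hBm]
  by_cases h : w = v₀ <;> simp [h]

/-! ### The bijection -/

open Classical in
/-- turning a vertex into a source. `R_{βF}(v₀,v₀) < 1`,
`R_{βF}(v,v₀) ≤ φ_v` for every `v₀`-normalized `A(β)`-harmonic vector `φ`, and
`φ ↦ (1 - R(v₀,v₀))⁻¹ (φ - R(·,v₀))` is an affine bicontinuous bijection from the
`v₀`-normalized `A(β)`-harmonic vectors onto the `v₀`-normalized `B(β)`-harmonic
vectors. -/
theorem statement13 {V A : Type} [Countable V] [Countable A] (s r : A → V)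
    (F : A → ℝ) (β : ℝ) (htrans : ∀ v w : V, Green s r F β v w ≠ ∞) (v₀ : V)
    (Bm : V → V → ℝ≥0∞)
    (hBm : ∀ v w : V, Bm v w = if w = v₀ then 0 else Amat s r F β v w)
    (T : (V → ℝ≥0∞) → (V → ℝ≥0∞))
    (hT : ∀ (φ : V → ℝ≥0∞) (v : V),
      T φ v = (φ v - Rsum s r F β v v₀) / (1 - Rsum s r F β v₀ v₀)) :
    Rsum s r F β v₀ v₀ < 1 ∧
    (∀ φ : V → ℝ≥0∞, IsHarmonic (Amat s r F β) φ → φ v₀ = 1 →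
      ∀ v : V, Rsum s r F β v v₀ ≤ φ v) ∧
    Set.BijOn T {φ : V → ℝ≥0∞ | IsHarmonic (Amat s r F β) φ ∧ φ v₀ = 1}
      {ψ : V → ℝ≥0∞ | IsHarmonic Bm ψ ∧ ψ v₀ = 1} ∧
    (∀ φ₁ ∈ {φ : V → ℝ≥0∞ | IsHarmonic (Amat s r F β) φ ∧ φ v₀ = 1},
      ∀ φ₂ ∈ {φ : V → ℝ≥0∞ | IsHarmonic (Amat s r F β) φ ∧ φ v₀ = 1},
      ∀ t : ℝ≥0∞, t ≤ 1 →
        T (fun v => t * φ₁ v + (1 - t) * φ₂ v) =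
          fun v => t * T φ₁ v + (1 - t) * T φ₂ v) ∧
    ContinuousOn T {φ : V → ℝ≥0∞ | IsHarmonic (Amat s r F β) φ ∧ φ v₀ = 1} ∧
    ∃ T' : (V → ℝ≥0∞) → (V → ℝ≥0∞),
      Set.InvOn T' T {φ : V → ℝ≥0∞ | IsHarmonic (Amat s r F β) φ ∧ φ v₀ = 1}
        {ψ : V → ℝ≥0∞ | IsHarmonic Bm ψ ∧ ψ v₀ = 1} ∧
      ContinuousOn T' {ψ : V → ℝ≥0∞ | IsHarmonic Bm ψ ∧ ψ v₀ = 1} ∧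
      ∀ ψ₁ ∈ {ψ : V → ℝ≥0∞ | IsHarmonic Bm ψ ∧ ψ v₀ = 1},
        ∀ ψ₂ ∈ {ψ : V → ℝ≥0∞ | IsHarmonic Bm ψ ∧ ψ v₀ = 1},
        ∀ t : ℝ≥0∞, t ≤ 1 →
          T' (fun v => t * ψ₁ v + (1 - t) * ψ₂ v) =
            fun v => t * T' ψ₁ v + (1 - t) * T' ψ₂ v := by
  set M := Amat s r F β with hM
  set R : V → ℝ≥0∞ := fun v => Rsum s r F β v v₀ with hRdef
  have split := tsum_split M Bm v₀ hBm
  -- The column `v₀` of `Bm` vanishes, so the right-hand side does not see `f v₀`.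
  have splitone : ∀ (f : V → ℝ≥0∞) v,
      ∑' u, M v u * (if u = v₀ then 1 else f u) = M v v₀ + ∑' u, Bm v u * f u := by
    intro f v
    rw [split]
    simp only [if_true, mul_one]
    congr 1
    refine tsum_congr fun u => ?_
    rw [hBm]
    by_cases h : u = v₀ <;> simp [h]
  have hRrec : ∀ v, R v = M v v₀ + ∑' u, Bm v u * R u := fun v =>
    (Rsum_rec s r F β v v₀).trans (splitone R v)
  have hRle : ∀ φ : V → ℝ≥0∞, (∀ v, M v v₀ + ∑' u, Bm v u * φ u ≤ φ v) → ∀ v, R v ≤ φ v :=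
    fun φ hφ v => Rsum_le s r F β v₀ φ (fun v => (splitone φ v).trans_le (hφ v)) v
  set G : V → ℝ≥0∞ := fun v => Green s r F β v v₀ with hG
  have hGfin : ∀ v, G v ≠ ∞ := fun v => htrans v v₀
  have hGrec : ∀ v, G v = ({v} : Set V).indicator (fun _ => (1 : ℝ≥0∞)) v₀ +
      (M v v₀ * G v₀ + ∑' u, Bm v u * G u) := fun v =>
    (Green_rec s r F β v v₀).trans (by rw [split G v])
  have hG1 : 1 ≤ G v₀ := by
    rw [hGrec v₀]
    simp
  have hG0 : G v₀ ≠ 0 := (lt_of_lt_of_le one_pos hG1).ne'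
  have hscale : ∀ v, M v v₀ + ∑' u, Bm v u * (G u / G v₀) =
      (M v v₀ * G v₀ + ∑' u, Bm v u * G u) / G v₀ := by
    intro v
    rw [ENNReal.add_div, ENNReal.mul_div_cancel_right hG0 (hGfin v₀)]
    congr 1
    simp_rw [div_eq_mul_inv, ← mul_assoc]
    rw [ENNReal.tsum_mul_right]
  have hRG : ∀ v, R v ≤ G v / G v₀ := by
    refine hRle _ fun v => ?_
    rw [hscale]
    refine ENNReal.div_le_div_right ?_ _
    conv_rhs => rw [hGrec v]
    exact le_add_self
  have hRfin : ∀ v, R v ≠ ∞ := fun v =>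
    ne_top_of_le_ne_top (ENNReal.div_ne_top (hGfin v) hG0) (hRG v)
  -- At `v₀` the unit mass in `G(v₀) = 1 + (A G)(v₀)` makes the bound `R ≤ G / G(v₀)` strict.
  have hR1 : R v₀ < 1 := by
    have h1 : R v₀ ≤ (M v₀ v₀ * G v₀ + ∑' u, Bm v₀ u * G u) / G v₀ := by
      rw [← hscale, hRrec v₀]
      gcongr with u
      exact hRG u
    refine h1.trans_lt ?_
    have h2 := hGrec v₀
    simp only [Set.mem_singleton_iff, Set.indicator_of_mem] at h2
    set X := M v₀ v₀ * G v₀ + ∑' u, Bm v₀ u * G u with hX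
    have hXfin : X ≠ ∞ := ne_top_of_le_ne_top (hGfin v₀) (by rw [h2]; exact le_add_self)
    rw [ENNReal.div_lt_iff (Or.inl hG0) (Or.inl (hGfin v₀)), one_mul, h2, add_comm]
    exact ENNReal.lt_add_right hXfin one_ne_zero
  have hMfin : ∀ v, M v v₀ ≠ ∞ := fun v =>
    ne_top_of_le_ne_top (hRfin v) (by rw [hRrec v]; exact le_self_add)
  set c : ℝ≥0∞ := 1 - R v₀ with hc
  have hc0 : c ≠ 0 := (tsub_pos_of_lt hR1).ne'
  have hcfin : c ≠ ∞ := ne_top_of_le_ne_top ENNReal.one_ne_top tsub_le_self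
  have hcR : c + R v₀ = 1 := tsub_add_cancel_of_le hR1.le
  have hT' : ∀ (φ : V → ℝ≥0∞) v, T φ v = (φ v - R v) / c := hT
  have hle : ∀ φ : V → ℝ≥0∞, IsHarmonic M φ → φ v₀ = 1 → ∀ v, R v ≤ φ v := by
    intro φ hφ h1
    refine hRle φ fun v => ?_
    have := split φ v
    rw [hφ.2.2 v, h1, mul_one] at this
    exact this.ge
  set SA : Set (V → ℝ≥0∞) := {φ | IsHarmonic M φ ∧ φ v₀ = 1} with hSA
  set SB : Set (V → ℝ≥0∞) := {ψ | IsHarmonic Bm ψ ∧ ψ v₀ = 1} with hSB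
  let T' : (V → ℝ≥0∞) → (V → ℝ≥0∞) := fun ψ v => c * ψ v + R v
  have hleft : ∀ φ ∈ SA, T' (T φ) = φ := by
    rintro φ ⟨hφ, h1⟩
    funext v
    change c * T φ v + R v = φ v
    rw [hT', ENNReal.mul_div_cancel hc0 hcfin, tsub_add_cancel_of_le (hle φ hφ h1 v)]
  have hright : ∀ ψ, T (T' ψ) = ψ := by
    intro ψ
    funext v
    rw [hT']
    change (c * ψ v + R v - R v) / c = ψ v
    rw [ENNReal.add_sub_cancel_right (hRfin v), mul_comm,
      ENNReal.mul_div_cancel_right hc0 hcfin]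
  have hne : ∀ ψ : V → ℝ≥0∞, ψ v₀ = 1 → ψ ≠ 0 := by
    rintro ψ h rfl
    simp at h
  have hmaps : Set.MapsTo T SA SB := by
    rintro φ ⟨hφ, h1⟩
    have hv0 : T φ v₀ = 1 := by
      rw [hT', h1]
      exact ENNReal.div_self hc0 hcfin
    refine ⟨⟨hne _ hv0, fun v => ?_, fun v => ?_⟩, hv0⟩
    · rw [hT']
      exact ENNReal.div_ne_top (ENNReal.sub_ne_top (hφ.2.1 v)) hc0
    · have hval : ∀ u, φ u = c * T φ u + R u := fun u => (congrFun (hleft φ ⟨hφ, h1⟩) u).symm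
      have hφv := hφ.2.2 v
      rw [split, h1, mul_one] at hφv
      have hexp : ∑' u, Bm v u * φ u = c * ∑' u, Bm v u * T φ u + ∑' u, Bm v u * R u := by
        rw [← ENNReal.tsum_mul_left, ← ENNReal.tsum_add]
        refine tsum_congr fun u => ?_
        rw [hval u]
        ring
      rw [hexp, hval v] at hφv
      have hfin : R v ≠ ∞ := hRfin v
      have h3 : c * ∑' u, Bm v u * T φ u + R v = c * T φ v + R v := by
        rw [← hφv]
        conv_lhs => rw [hRrec v]
        ring
      have h4 := (ENNReal.add_left_inj hfin).1 h3
      exact (ENNReal.mul_right_inj hc0 hcfin).1 h4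
  have hmaps' : Set.MapsTo T' SB SA := by
    rintro ψ ⟨hψ, h1⟩
    have hv0 : T' ψ v₀ = 1 := by
      change c * ψ v₀ + R v₀ = 1
      rw [h1, mul_one, hcR]
    refine ⟨⟨hne _ hv0, fun v => ?_, fun v => ?_⟩, hv0⟩
    · exact ENNReal.add_ne_top.2 ⟨ENNReal.mul_ne_top hcfin (hψ.2.1 v), hRfin v⟩
    · rw [split, hv0, mul_one]
      have hexp : ∑' u, Bm v u * T' ψ u = c * ∑' u, Bm v u * ψ u + ∑' u, Bm v u * R u := by
        rw [← ENNReal.tsum_mul_left, ← ENNReal.tsum_add]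
        refine tsum_congr fun u => ?_
        change Bm v u * (c * ψ u + R u) = _
        ring
      rw [hexp, hψ.2.2 v]
      change _ = c * ψ v + R v
      conv_rhs => rw [hRrec v]
      ring
  have hinv : Set.InvOn T' T SA SB := ⟨hleft, fun ψ _ => hright ψ⟩
  have haff' : ∀ (ψ₁ ψ₂ : V → ℝ≥0∞) (t : ℝ≥0∞), t ≤ 1 →
      T' (fun v => t * ψ₁ v + (1 - t) * ψ₂ v) =
        fun v => t * T' ψ₁ v + (1 - t) * T' ψ₂ v := by
    intro ψ₁ ψ₂ t ht
    funext v
    change c * (t * ψ₁ v + (1 - t) * ψ₂ v) + R v =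
      t * (c * ψ₁ v + R v) + (1 - t) * (c * ψ₂ v + R v)
    have h1 : R v = t * R v + (1 - t) * R v := by
      rw [← add_mul, add_tsub_cancel_of_le ht, one_mul]
    conv_lhs => rw [h1]
    ring
  refine ⟨hR1, hle, hinv.bijOn hmaps hmaps', ?_, ?_, T', hinv, ?_,
    fun ψ₁ _ ψ₂ _ t ht => haff' ψ₁ ψ₂ t ht⟩
  · intro φ₁ h₁ φ₂ h₂ t ht
    -- `T` inherits affinity from its right inverse `T'`.
    have := haff' (T φ₁) (T φ₂) t ht
    rw [hleft φ₁ h₁, hleft φ₂ h₂] at this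
    rw [← this, hright]
  · refine Continuous.continuousOn (continuous_pi fun v => ?_)
    simp_rw [hT']
    exact (ENNReal.continuous_div_const c hc0).comp
      ((ENNReal.continuous_sub_right (R v)).comp (continuous_apply v))
  · refine Continuous.continuousOn (continuous_pi fun v => ?_)
    exact ((ENNReal.continuous_const_mul hcfin).comp (continuous_apply v)).add continuous_const

end GraphKMS
end

section
/- Let Γ be a strongly connected countable directed graph with potential F : Γ_Ar → ℝ. For every β ∈ ℝ and every vertex v ∈ Γ_V set ρ_v(β) = limsup_{n→∞} (A(β)^n_{v,v})^{1/n} ∈ [0,∞]. Then ρ_v(β) does not depend on v, ρ_v(β) > 0 for all β ∈ ℝ, and the function β ↦ ρ_v(β), from ℝ to (0,∞], is lower semicontinuous. -/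
/-!
The diagonal entries of the powers of a `[0,∞]`-valued matrix are supermultiplicative,
`Mᵐ_{v,v} * Mⁿ_{v,v} ≤ Mᵐ⁺ⁿ_{v,v}`, so the `limsup` of their `n`-th roots equals the supremum over
`n ≥ 1` (`limsup_eq_iSup`). All three claims follow from this description.

* Positivity: a loop at `v` makes one of the roots positive (`limsup_pos`).
* Independence of the vertex: if `t = ρ_v` is finite, concatenating a path from `v` to `w`, `j` loops
  of length `n` at `w` and a path back gives `c * (Aⁿ_{w,w} / tⁿ) ^ j ≤ t ^ K` for all `j`, with
  `c > 0`; hence `Aⁿ_{w,w} ≤ tⁿ` (`limsup_le`).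
* Lower semicontinuity: each entry of `A(β)ⁿ` is built from continuous nonnegative functions of `β`
  by products and infinite sums, hence is lower semicontinuous (`lowerSemicontinuous_matPow`), and a
  supremum of lower semicontinuous functions is lower semicontinuous.
-/

open MeasureTheory Filter Topology
open scoped ENNReal NNReal

namespace GraphKMS

variable {V A : Type}

/-- Powers are supermultiplicative along a fixed intermediate index. -/
theorem matPow_add_ge (M : V → V → ℝ≥0∞) (m n : ℕ) (u v w : V) :
    matPow M m u v * matPow M n v w ≤ matPow M (m + n) u w := by
  induction m generalizing u with
  | zero =>
    by_cases h : v = u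
    · subst h
      simp [matPow]
    · simp [matPow, h]
  | succ m ih =>
    rw [Nat.add_right_comm]
    simp only [matPow]
    rw [← ENNReal.tsum_mul_right]
    refine ENNReal.tsum_le_tsum fun x => ?_
    rw [mul_assoc]
    gcongr
    exact ih x

theorem matPow_pow_le (M : V → V → ℝ≥0∞) (k j : ℕ) (v : V) :
    matPow M k v v ^ j ≤ matPow M (j * k) v v := by
  induction j with
  | zero => simp [matPow]
  | succ j ih =>
    rw [pow_succ, Nat.succ_mul]
    exact (mul_le_mul_left ih _).trans (matPow_add_ge M _ _ _ _ _)

/-- By supermultiplicativity of the diagonal entries (Fekete), the `limsup` of the `n`-th roots is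
their supremum over `n ≥ 1`. -/
theorem limsup_eq_iSup (M : V → V → ℝ≥0∞) (v : V) :
    limsup (fun n : ℕ => matPow M n v v ^ ((n : ℝ)⁻¹)) atTop =
      ⨆ n : ℕ, matPow M (n + 1) v v ^ (((n + 1 : ℕ) : ℝ)⁻¹) := by
  apply le_antisymm
  · refine limsup_le_of_le (by isBoundedDefault) ?_
    filter_upwards [eventually_ge_atTop 1] with n hn
    obtain ⟨k, rfl⟩ := Nat.exists_eq_add_of_le' hn
    exact le_iSup (fun n : ℕ => matPow M (n + 1) v v ^ (((n + 1 : ℕ) : ℝ)⁻¹)) k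
  · refine iSup_le fun k => le_limsup_of_frequently_le ?_ (by isBoundedDefault)
    refine frequently_atTop.2 fun N => ⟨(N + 1) * (k + 1), by nlinarith, ?_⟩
    calc matPow M (k + 1) v v ^ (((k + 1 : ℕ) : ℝ)⁻¹)
        = (matPow M (k + 1) v v ^ (N + 1)) ^ ((((N + 1) * (k + 1) : ℕ) : ℝ)⁻¹) := by
          rw [← ENNReal.rpow_natCast, ← ENNReal.rpow_mul]
          congr 1
          push_cast
          field_simp
      _ ≤ _ := ENNReal.rpow_le_rpow (matPow_pow_le M _ _ _) (by positivity)

theorem Amat_pos (s r : A → V) (F : A → ℝ) (β : ℝ) (a : A) :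
    0 < Amat s r F β (s a) (r a) := by
  refine lt_of_lt_of_le ?_ (ENNReal.le_tsum (⟨a, rfl, rfl⟩ : {b : A // s b = s a ∧ r b = r a}))
  simpa using Real.exp_pos _

theorem Apow_pos_of_path (s r : A → V) (F : A → ℝ) (β : ℝ) (l : List A) (v w : V)
    (h : IsPathList s r l v w) : 0 < matPow (Amat s r F β) l.length v w := by
  induction l generalizing v with
  | nil => exact absurd rfl h.1
  | cons a l ih =>
    obtain ⟨-, hc, hs, hr⟩ := h
    have hs' : s a = v := hs (by simp)
    subst hs'
    have key : 0 < matPow (Amat s r F β) l.length (r a) w := by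
      cases l with
      | nil =>
        have : r a = w := hr (by simp)
        simp [matPow, this]
      | cons b l =>
        refine ih (r a) ⟨by simp, ?_, fun _ => ?_, fun _ => ?_⟩
        · exact (List.isChain_cons_cons.1 hc).2
        · exact (List.isChain_cons_cons.1 hc).1.symm
        · simpa using hr (by simp)
    refine lt_of_lt_of_le ?_ (ENNReal.le_tsum (r a))
    exact ENNReal.mul_pos (Amat_pos s r F β a).ne' key.ne'

theorem limsup_pos (s r : A → V) (F : A → ℝ) (hsc : ∀ v w : V, ∃ l : List A, IsPathList s r l v w)
    (β : ℝ) (v : V) :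
    0 < limsup (fun n : ℕ => matPow (Amat s r F β) n v v ^ ((n : ℝ)⁻¹)) atTop := by
  obtain ⟨l, hl⟩ := hsc v v
  have hp := Apow_pos_of_path s r F β l v v hl
  have h1 : 1 ≤ l.length := List.length_pos_iff.2 hl.1
  obtain ⟨k, hk⟩ := Nat.exists_eq_add_of_le' h1
  rw [hk] at hp
  rw [limsup_eq_iSup]
  refine lt_of_lt_of_le ?_ (le_iSup _ k)
  exact ENNReal.rpow_pos_of_nonneg hp (by positivity)

/-- If `t = ρ_v` is finite then `A^m_{v,v} ≤ t ^ m` for all `m ≥ 1`. Going from `v` to `w`, `j` times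
around loops of length `n` at `w`, and back gives `c * (A^n_{w,w}) ^ j ≤ t ^ (j * n + K)` for
all `j`, with `c > 0`, which forces `A^n_{w,w} ≤ t ^ n`. -/
theorem limsup_le (s r : A → V) (F : A → ℝ) (hsc : ∀ v w : V, ∃ l : List A, IsPathList s r l v w)
    (β : ℝ) (v w : V) :
    limsup (fun n : ℕ => matPow (Amat s r F β) n w w ^ ((n : ℝ)⁻¹)) atTop ≤
      limsup (fun n : ℕ => matPow (Amat s r F β) n v v ^ ((n : ℝ)⁻¹)) atTop := by
  have ht0 := limsup_pos s r F hsc β v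
  set t := limsup (fun n : ℕ => matPow (Amat s r F β) n v v ^ ((n : ℝ)⁻¹)) atTop with ht
  rcases eq_or_ne t ∞ with htop | htop
  · rw [htop]
    exact le_top
  have hv : ∀ m : ℕ, matPow (Amat s r F β) (m + 1) v v ≤ t ^ (m + 1) := by
    intro m
    have h : matPow (Amat s r F β) (m + 1) v v ^ (((m + 1 : ℕ) : ℝ)⁻¹) ≤ t := by
      rw [ht, limsup_eq_iSup]
      exact le_iSup (fun n : ℕ => matPow (Amat s r F β) (n + 1) v v ^ (((n + 1 : ℕ) : ℝ)⁻¹)) m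
    rw [ENNReal.rpow_inv_le_iff (by positivity)] at h
    rwa [ENNReal.rpow_natCast] at h
  obtain ⟨l₁, hl₁⟩ := hsc v w
  obtain ⟨l₂, hl₂⟩ := hsc w v
  have hp₁ := Apow_pos_of_path s r F β l₁ v w hl₁
  have hp₂ := Apow_pos_of_path s r F β l₂ w v hl₂
  obtain ⟨k, hk⟩ := Nat.exists_eq_add_of_le' (List.length_pos_iff.2 hl₂.1 : 1 ≤ l₂.length)
  rw [hk] at hp₂
  rw [limsup_eq_iSup]
  refine iSup_le fun n => ?_
  rw [ENNReal.rpow_inv_le_iff (by positivity), ENNReal.rpow_natCast]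
  set a := matPow (Amat s r F β) (n + 1) w w
  set c₁ := matPow (Amat s r F β) l₁.length v w
  set c₂ := matPow (Amat s r F β) (k + 1) w v
  have htn0 : t ^ (n + 1) ≠ 0 := pow_ne_zero _ ht0.ne'
  have htn : t ^ (n + 1) ≠ ∞ := ENNReal.pow_ne_top htop
  have hj : ∀ j : ℕ, c₁ * c₂ * (a / t ^ (n + 1)) ^ j ≤ t ^ (l₁.length + (k + 1)) := by
    intro j
    have h1 : c₁ * a ^ j * c₂ ≤ t ^ (l₁.length + j * (n + 1) + (k + 1)) :=
      calc c₁ * a ^ j * c₂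
          ≤ c₁ * matPow (Amat s r F β) (j * (n + 1)) w w * c₂ := by
            gcongr
            exact matPow_pow_le _ _ _ _
        _ ≤ matPow (Amat s r F β) (l₁.length + j * (n + 1)) v w * c₂ := by
            gcongr
            exact matPow_add_ge _ _ _ _ _ _
        _ ≤ _ := matPow_add_ge _ _ _ _ _ _
        _ ≤ _ := hv _
    rw [div_eq_mul_inv, mul_pow, ← ENNReal.inv_pow, ← mul_assoc, ← div_eq_mul_inv]
    refine ENNReal.div_le_of_le_mul ?_
    calc c₁ * c₂ * a ^ j = c₁ * a ^ j * c₂ := by ring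
      _ ≤ _ := h1
      _ = _ := by ring
  by_contra! hlt
  have hx : 1 < a / t ^ (n + 1) := by
    rw [ENNReal.lt_div_iff_mul_lt (Or.inl htn0) (Or.inl htn)]
    simpa using hlt
  have hlim : Tendsto (fun j : ℕ => c₁ * c₂ * (a / t ^ (n + 1)) ^ j) atTop (𝓝 (c₁ * c₂ * ∞)) :=
    ENNReal.Tendsto.const_mul (ENNReal.tendsto_pow_atTop_nhds_top_iff.2 hx) (Or.inl (by simp))
  rw [ENNReal.mul_top (mul_ne_zero hp₁.ne' hp₂.ne')] at hlim
  have := le_of_tendsto' hlim hj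
  exact ENNReal.pow_ne_top htop (top_le_iff.1 this)

theorem lowerSemicontinuous_ennreal_mul {f g : ℝ → ℝ≥0∞} (hf : LowerSemicontinuous f)
    (hg : LowerSemicontinuous g) : LowerSemicontinuous fun x => f x * g x := by
  intro x y hy
  have hy' : y < f x * g x := hy
  obtain ⟨a, ha, b, hb, hab⟩ : ∃ a < f x, ∃ b < g x, y < a * b := by
    by_contra! h
    exact hy'.not_ge (ENNReal.mul_le_of_forall_lt h)
  filter_upwards [hf x a ha, hg x b hb] with z h1 h2
  exact hab.trans_le (mul_le_mul' h1.le h2.le)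

theorem lowerSemicontinuous_matPow (s r : A → V) (F : A → ℝ) (n : ℕ) (v w : V) :
    LowerSemicontinuous fun β : ℝ => matPow (Amat s r F β) n v w := by
  induction n generalizing v with
  | zero => exact lowerSemicontinuous_const
  | succ n ih =>
    refine lowerSemicontinuous_tsum fun u => lowerSemicontinuous_ennreal_mul ?_ (ih u)
    refine lowerSemicontinuous_tsum fun a => Continuous.lowerSemicontinuous ?_
    exact ENNReal.continuous_ofReal.comp (by fun_prop)

/-- for a strongly connected graph, the spectral radius
`ρ_v(β) = limsupₙ (A(β)ⁿ_{v,v})^{1/n}` is independent of `v`, strictly positive, and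
lower semicontinuous as a function of `β`. -/
theorem statement15 {V A : Type} [Countable V] [Countable A] (s r : A → V)
    (F : A → ℝ)
    (hsc : ∀ v w : V, ∃ l : List A, IsPathList s r l v w) :
    (∀ (β : ℝ) (v w : V),
      Filter.limsup (fun n : ℕ => Apow s r F β n v v ^ ((n : ℝ)⁻¹)) Filter.atTop =
        Filter.limsup (fun n : ℕ => Apow s r F β n w w ^ ((n : ℝ)⁻¹)) Filter.atTop) ∧
    (∀ (β : ℝ) (v : V),
      0 < Filter.limsup (fun n : ℕ => Apow s r F β n v v ^ ((n : ℝ)⁻¹)) Filter.atTop) ∧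
    ∀ v : V, LowerSemicontinuous fun β : ℝ =>
      Filter.limsup (fun n : ℕ => Apow s r F β n v v ^ ((n : ℝ)⁻¹)) Filter.atTop := by
  refine ⟨fun β v w => ?_, fun β v => limsup_pos s r F hsc β v, fun v => ?_⟩
  · exact le_antisymm (limsup_le s r F hsc β w v) (limsup_le s r F hsc β v w)
  · simp only [Apow, limsup_eq_iSup]
    refine lowerSemicontinuous_iSup fun n => ?_
    exact ENNReal.continuous_rpow_const.comp_lowerSemicontinuous
      (lowerSemicontinuous_matPow s r F (n + 1) v v)
      (ENNReal.monotone_rpow_of_nonneg (by positivity))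

end GraphKMS
end
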